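/- arXiv:2501.16339 — 2 statements merged into one kernel-verified Lean document; each statement's English description precedes it below -/
import Mathlib

section
/- (Proposition 7.2) Let t = diag(t_1,…,t_{l-1}, [[a,bρ],[b,a]], t_{l-1}^{-1},…,t_1^{-1}) with t_1,…,t_{l-1} ∈ F^×, a,b ∈ F, a² − b²ρ = 1, let 0 ≤ n ≤ l−1, let σ ∈ GL_n(F) be a permutation matrix, and put w = t_n(σ)·w̃_n (with w = I_{2l} when n = 0). Then j(t·w) ∈ Q_l·w_l·V_l if and only if n = l−1 and a ≠ 1. Moreover, if n = l−1 and a ≠ 1 and j(t·w) = l_l(A)·n₁·w_l·n₂ with A ∈ GL_l(F) and n₁, n₂ ∈ V_l, then A* := J_l·ᵀA^{-1}·J_l is the l×l matrix whose first row is (0, …, 0, γ(1−a)/2), whose lower-left (l−1)×(l−1) block is diag(t_{l-1}^{-1},…,t_1^{-1})·σ* with σ* = J_{l-1}·ᵀσ^{-1}·J_{l-1}, and whose last column has all entries 0 except the top entry γ(1−a)/2. -/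
/-!
The cell `Q_l·w_l·V_l` is seen in the lower left `l × l` block: since `V_l` is block unipotent upper
triangular and `w_l` swaps the outer blocks, that block of `l_l(A)·n₁·w_l·n₂` is exactly `A*`
(`cell_lower_left`), which is invertible. The same block of `j(t·w)` is computed in
`jmap_lower_left`: its first row is `(0, …, 0, γ(1-a)/2)`, and its rows number `2, …, l-n`
(counted from `1`) vanish. Comparing the two gives the formula for `A*`, and invertibility forces
`a ≠ 1` and, because `l ≥ 2`, also `n = l - 1`.

Conversely, for `n = l - 1` and `a ≠ 1` the matrix `j(t·w)` is written down (`jmap_eq`) and factored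
explicitly (`jExplicit_factor`): `A` is the matrix `cellA` whose `A*` is the asserted one, and `n₁`,
`n₂` are single root elements (`rootElt`) of `V_l` attached to short roots. Outside the middle three
indices the identity is one between monomial blocks; on the middle `3 × 3` block it is the Bruhat
decomposition of an element of `SO_3`, whose lower left entry `γ(1-a)/2` is nonzero, and it
follows from `a² - b²ρ = 1`.
-/

open Matrix BigOperators

noncomputable section

/-- Entry of a square matrix read with 0-indexed natural-number indices (`0` out of range). -/
def ent {F : Type*} [Field F] {N : ℕ} (g : Matrix (Fin N) (Fin N) F) (i j : ℕ) : F :=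
  if h : i < N ∧ j < N then g ⟨i, h.1⟩ ⟨j, h.2⟩ else 0

/-- The antidiagonal matrix `J_n` (entry `(i,j)` is `1` iff `i+j = n+1` in 1-indexed terms). -/
def Jmat (F : Type*) [Field F] (n : ℕ) : Matrix (Fin n) (Fin n) F :=
  Matrix.of fun i j => if (i : ℕ) + (j : ℕ) + 1 = n then 1 else 0

/-- `J_{2l,ρ} = diag(I_{l-1}, [[0,1],[-ρ,0]], I_{l-1}) · J_{2l}`. -/
def Jrho (F : Type*) [Field F] (l : ℕ) (ρ : F) : Matrix (Fin (2*l)) (Fin (2*l)) F :=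
  (Matrix.of fun i j : Fin (2*l) =>
    if (i : ℕ) = l - 1 ∧ (j : ℕ) = l then 1
    else if (i : ℕ) = l ∧ (j : ℕ) = l - 1 then -ρ
    else if i = j ∧ ((i : ℕ) < l - 1 ∨ l + 1 ≤ (i : ℕ)) then 1
    else 0) * Jmat F (2*l)

/-- Membership in the quasi-split even special orthogonal group `SO_{2l}(J_{2l,ρ})`. -/
def SO2l {F : Type*} [Field F] (l : ℕ) (ρ : F) (g : Matrix (Fin (2*l)) (Fin (2*l)) F) : Prop :=
  g.det = 1 ∧ gᵀ * Jrho F l ρ * g = Jrho F l ρ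

/-- Membership in `U_{SO_{2l}}`: upper triangular, all diagonal entries `1`, and in `SO_{2l}`. -/
def USO2l {F : Type*} [Field F] (l : ℕ) (ρ : F) (g : Matrix (Fin (2*l)) (Fin (2*l)) F) : Prop :=
  SO2l l ρ g ∧ (∀ i j : Fin (2*l), (j : ℕ) < (i : ℕ) → g i j = 0) ∧ ∀ i, g i i = 1

/-- Membership in `SO_{2l+1}(F)` (with respect to the antidiagonal form `J_{2l+1}`). -/
def SO2l1 {F : Type*} [Field F] (l : ℕ) (g : Matrix (Fin (2*l+1)) (Fin (2*l+1)) F) : Prop :=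
  g.det = 1 ∧ gᵀ * Jmat F (2*l+1) * g = Jmat F (2*l+1)

/-- For `g = [[A,B],[C,D]]` in `l×l` blocks, `ĝ = [[A,0,B],[0,1,0],[C,0,D]]`,
obtained by inserting a middle row and column. -/
def hatg {F : Type*} [Field F] (l : ℕ) (g : Matrix (Fin (2*l)) (Fin (2*l)) F) :
    Matrix (Fin (2*l+1)) (Fin (2*l+1)) F :=
  Matrix.of fun i j =>
    if (i : ℕ) = l ∨ (j : ℕ) = l then (if i = j then 1 else 0)
    else ent g (if (i : ℕ) < l then (i : ℕ) else (i : ℕ) - 1)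
      (if (j : ℕ) < l then (j : ℕ) else (j : ℕ) - 1)

/-- `M = diag(I_{l-1}, M̃, I_{l-1})` with `M̃ = [[0,1,0],[1/2,0,1/(2γ)],[1/2,0,−1/(2γ)]]`
and `γ = ρ/2`. -/
def Mmat (F : Type*) [Field F] (l : ℕ) (ρ : F) : Matrix (Fin (2*l+1)) (Fin (2*l+1)) F :=
  Matrix.of fun i j =>
    if (i : ℕ) = l - 1 then (if (j : ℕ) = l then 1 else 0)
    else if (i : ℕ) = l then
      (if (j : ℕ) = l - 1 then 1/2 else if (j : ℕ) = l + 1 then 1 / (2 * (ρ/2)) else 0)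
    else if (i : ℕ) = l + 1 then
      (if (j : ℕ) = l - 1 then 1/2 else if (j : ℕ) = l + 1 then -(1 / (2 * (ρ/2))) else 0)
    else if i = j then 1 else 0

/-- The embedding `j : SO_{2l}(J_{2l,ρ}) → SO_{2l+1}(F)`, `j(g) = M⁻¹·ĝ·M`. -/
def jmap {F : Type*} [Field F] (l : ℕ) (ρ : F) (g : Matrix (Fin (2*l)) (Fin (2*l)) F) :
    Matrix (Fin (2*l+1)) (Fin (2*l+1)) F :=
  (Mmat F l ρ)⁻¹ * hatg l g * Mmat F l ρ

/-- `A* = J_n·ᵀA⁻¹·J_n`. -/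
def astar {F : Type*} [Field F] {n : ℕ} (A : Matrix (Fin n) (Fin n) F) :
    Matrix (Fin n) (Fin n) F :=
  Jmat F n * (A⁻¹)ᵀ * Jmat F n

/-- The block index (0, 1 or 2) of an index of `Fin (2l+1)` for block sizes `(l, 1, l)`. -/
def blockOf3 (l i : ℕ) : ℕ := if i < l then 0 else if i = l then 1 else 2

/-- `V_l`: elements `v ∈ SO_{2l+1}(F)` with `v − I_{2l+1}` strictly block upper triangular
with respect to the block sizes `(l, 1, l)` (the unipotent radical of the Siegel
parabolic `Q_l`). -/
def VlMem {F : Type*} [Field F] (l : ℕ) (v : Matrix (Fin (2*l+1)) (Fin (2*l+1)) F) : Prop :=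
  SO2l1 l v ∧ ∀ i j : Fin (2*l+1), ¬ blockOf3 l (i : ℕ) < blockOf3 l (j : ℕ) →
    v i j = (if i = j then 1 else 0)

/-- `l_l(A) = diag(A, 1, A*) ∈ GL_{2l+1}(F)`. -/
def llMat {F : Type*} [Field F] (l : ℕ) (A : Matrix (Fin l) (Fin l) F) :
    Matrix (Fin (2*l+1)) (Fin (2*l+1)) F :=
  Matrix.of fun i j =>
    if (i : ℕ) < l then (if (j : ℕ) < l then ent A (i : ℕ) (j : ℕ) else 0)
    else if (i : ℕ) = l then (if i = j then 1 else 0)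
    else (if l + 1 ≤ (j : ℕ) then ent (astar A) ((i : ℕ) - (l+1)) ((j : ℕ) - (l+1)) else 0)

/-- `w_l = [[0,0,I_l],[0,(−1)^l,0],[I_l,0,0]] ∈ SO_{2l+1}(F)`. -/
def wlMat (F : Type*) [Field F] (l : ℕ) : Matrix (Fin (2*l+1)) (Fin (2*l+1)) F :=
  Matrix.of fun i j =>
    if (i : ℕ) < l then (if (j : ℕ) = (i : ℕ) + l + 1 then 1 else 0)
    else if (i : ℕ) = l then (if i = j then (-1)^l else 0)
    else (if (j : ℕ) + l + 1 = (i : ℕ) then 1 else 0)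

/-- The Weyl element `w̃_n ∈ GL_{2l}(F)`: block matrix with block sizes
`(n, l−n−1, 2, l−n−1, n)`, nonzero blocks being the `(1,5)`- and `(5,1)`-blocks `I_n`,
the `(2,2)`- and `(4,4)`-blocks `I_{l−n−1}`, and the `(3,3)`-block `diag((−1)^n, 1)`. -/
def wtmat2l (F : Type*) [Field F] (l n : ℕ) : Matrix (Fin (2*l)) (Fin (2*l)) F :=
  Matrix.of fun i j =>
    if (i : ℕ) < n then (if (j : ℕ) = 2*l - n + (i : ℕ) then 1 else 0)
    else if (i : ℕ) < l - 1 then (if i = j then 1 else 0)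
    else if (i : ℕ) = l - 1 then (if i = j then (-1)^n else 0)
    else if (i : ℕ) = l then (if i = j then 1 else 0)
    else if (i : ℕ) < 2*l - n then (if i = j then 1 else 0)
    else (if (j : ℕ) + (2*l - n) = (i : ℕ) then 1 else 0)

/-- The torus matrix `t = diag(t_1,…,t_{l-1}, [[a, bρ],[b, a]], t_{l-1}⁻¹,…,t_1⁻¹)`
(`t : ℕ → Fˣ` is 0-indexed: `t k` stands for `t_{k+1}`). -/
def torusMat {F : Type*} [Field F] (l : ℕ) (t : ℕ → Fˣ) (a b ρ : F) :
    Matrix (Fin (2*l)) (Fin (2*l)) F :=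
  Matrix.of fun i j =>
    if (i : ℕ) = l - 1 then
      (if (j : ℕ) = l - 1 then a else if (j : ℕ) = l then b * ρ else 0)
    else if (i : ℕ) = l then
      (if (j : ℕ) = l - 1 then b else if (j : ℕ) = l then a else 0)
    else if i = j then
      (if (i : ℕ) < l - 1 then (t (i : ℕ) : F) else ((t (2*l - 1 - (i : ℕ)))⁻¹ : F))
    else 0

/-- `σ` is a permutation matrix. -/
def IsPermMat {F : Type*} [Field F] {n : ℕ} (σ : Matrix (Fin n) (Fin n) F) : Prop :=
  ∃ τ : Equiv.Perm (Fin n), ∀ i j, σ i j = if j = τ i then 1 else 0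

/-- `t_n(σ) = diag(σ, I_{2(l−n)}, J_n·ᵀσ⁻¹·J_n)`. -/
def tnMat {F : Type*} [Field F] (l n : ℕ) (σ : Matrix (Fin n) (Fin n) F) :
    Matrix (Fin (2*l)) (Fin (2*l)) F :=
  Matrix.of fun i j =>
    if (i : ℕ) < n ∧ (j : ℕ) < n then ent σ (i : ℕ) (j : ℕ)
    else if 2*l - n ≤ (i : ℕ) ∧ 2*l - n ≤ (j : ℕ) then
      ent (astar σ) ((i : ℕ) - (2*l - n)) ((j : ℕ) - (2*l - n))
    else if i = j then 1 else 0

/-- `w = t_n(σ)·w̃_n` (with `w = I_{2l}` when `n = 0`). -/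
def wElt {F : Type*} [Field F] (l n : ℕ) (σ : Matrix (Fin n) (Fin n) F) :
    Matrix (Fin (2*l)) (Fin (2*l)) F :=
  if n = 0 then 1 else tnMat l n σ * wtmat2l F l n

/-- The matrix `A*` claimed in Proposition 7.2: first row `(0,…,0, γ(1−a)/2)` (with
`γ = ρ/2`), last column `0` below the top entry, and lower-left `(l−1)×(l−1)` block
`diag(t_{l-1}⁻¹,…,t_1⁻¹)·σ*`. -/
def Aspec {F : Type*} [Field F] (l : ℕ) (ρ a : F) (t : ℕ → Fˣ) {n : ℕ}
    (σ : Matrix (Fin n) (Fin n) F) : Matrix (Fin l) (Fin l) F :=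
  Matrix.of fun i j =>
    if (i : ℕ) = 0 then (if (j : ℕ) = l - 1 then (ρ/2) * (1 - a) / 2 else 0)
    else if (j : ℕ) = l - 1 then 0
    else ((t (l - 2 - ((i : ℕ) - 1)))⁻¹ : F) * ent (astar σ) ((i : ℕ) - 1) (j : ℕ)

/-! ### Matrices with sparse rows or columns -/

section Helpers

variable {F : Type*} [Field F]

/-- Product with a right factor whose `j`-th column is supported at the row `k`. -/
lemma mul_apply_col {N : ℕ} (P Q : Matrix (Fin N) (Fin N) F) (i j k : Fin N)
    (h : ∀ k', k' ≠ k → Q k' j = 0) : (P * Q) i j = P i k * Q k j := by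
  rw [Matrix.mul_apply]
  exact Finset.sum_eq_single k (fun b _ hb => by rw [h b hb, mul_zero]) (by simp)

/-- Product with a left factor whose `i`-th row is supported at the column `k`. -/
lemma mul_apply_row {N : ℕ} (P Q : Matrix (Fin N) (Fin N) F) (i j k : Fin N)
    (h : ∀ k', k' ≠ k → P i k' = 0) : (P * Q) i j = P i k * Q k j := by
  rw [Matrix.mul_apply]
  exact Finset.sum_eq_single k (fun b _ hb => by rw [h b hb, zero_mul]) (by simp)

lemma mul_single_eq {N : ℕ} (P : Matrix (Fin N) (Fin N) F) (p q a b : Fin N) (c : F) :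
    (P * Matrix.single p q c) a b = if b = q then P a p * c else 0 := by
  split_ifs with h
  · subst h; simp
  · simp [h]

lemma sum_two {N : ℕ} (f : Fin N → F) (p q : Fin N) (hpq : p ≠ q)
    (h : ∀ k, k ≠ p → k ≠ q → f k = 0) : ∑ k, f k = f p + f q :=
  Fintype.sum_eq_add p q hpq fun x hx => h x hx.1 hx.2

lemma ent_eq {N : ℕ} (g : Matrix (Fin N) (Fin N) F) {i j : ℕ} (hi : i < N) (hj : j < N) :
    ent g i j = g ⟨i, hi⟩ ⟨j, hj⟩ := by
  simp [ent, hi, hj]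

/-! ### The antidiagonal form and the involution `A ↦ A*` -/

lemma Jmat_mul_apply {N : ℕ} (P : Matrix (Fin N) (Fin N) F) (i j : Fin N) :
    (Jmat F N * P) i j = P i.rev j := by
  rw [mul_apply_row _ _ i j i.rev]
  · have : (i : ℕ) + (i.rev : ℕ) + 1 = N := by rw [Fin.val_rev]; omega
    simp only [Jmat, Matrix.of_apply, if_pos this, one_mul]
  · intro k hk
    have : ¬ (i : ℕ) + (k : ℕ) + 1 = N := by
      intro h; apply hk; ext; rw [Fin.val_rev]; omega
    simp [Jmat, this]

lemma mul_Jmat_apply {N : ℕ} (P : Matrix (Fin N) (Fin N) F) (i j : Fin N) :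
    (P * Jmat F N) i j = P i j.rev := by
  rw [mul_apply_col _ _ i j j.rev]
  · have : (j.rev : ℕ) + (j : ℕ) + 1 = N := by rw [Fin.val_rev]; omega
    simp only [Jmat, Matrix.of_apply, if_pos this, mul_one]
  · intro k hk
    have : ¬ (k : ℕ) + (j : ℕ) + 1 = N := by
      intro h; apply hk; ext; rw [Fin.val_rev]; omega
    simp [Jmat, this]

/-- `A*` is the inverse of `A` reflected in the antidiagonal. -/
lemma astar_apply {N : ℕ} (A : Matrix (Fin N) (Fin N) F) (i j : Fin N) :
    astar A i j = A⁻¹ j.rev i.rev := by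
  rw [astar, mul_Jmat_apply, Jmat_mul_apply, Matrix.transpose_apply]

/-! ### Root-type unipotent elements of `V_l` -/

/-- The element `1 + x·E_{pq} − x·E_{qr} − (x²/2)·E_{pr}`; when `p < q < r`, with `q` the middle
index and `r` the reflection of `p`, it is a one-parameter unipotent subgroup of `SO_{2l+1}`. -/
def rootElt {N : ℕ} (p q r : Fin N) (x : F) : Matrix (Fin N) (Fin N) F :=
  1 + (Matrix.single p q x + Matrix.single q r (-x) + Matrix.single p r (-(x ^ 2 / 2)))

lemma mul_rootElt_apply {N : ℕ} (P : Matrix (Fin N) (Fin N) F) (p q r i j : Fin N) (x : F) :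
    (P * rootElt p q r x) i j = P i j + ((if j = q then P i p * x else 0)
      + (if j = r then P i q * (-x) else 0) + (if j = r then P i p * (-(x ^ 2 / 2)) else 0)) := by
  simp only [rootElt, mul_add, Matrix.mul_one, Matrix.add_apply, mul_single_eq]

lemma Jmat_mul_single {N : ℕ} (p q : Fin N) (x : F) :
    Jmat F N * Matrix.single p q x = Matrix.single p.rev q x := by
  ext i j
  rw [Jmat_mul_apply, Matrix.single_apply, Matrix.single_apply]
  have : p = i.rev ↔ p.rev = i := by rw [Fin.rev_eq_iff]
  simp [this]

lemma single_mul_Jmat {N : ℕ} (p q : Fin N) (x : F) :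
    Matrix.single p q x * Jmat F N = Matrix.single p q.rev x := by
  ext i j
  rw [mul_Jmat_apply, Matrix.single_apply, Matrix.single_apply]
  have : q = j.rev ↔ q.rev = j := by rw [Fin.rev_eq_iff]
  simp [this]

lemma rootElt_form {N : ℕ} (h2 : (2 : F) ≠ 0) (p q r : Fin N) (hpq : p ≠ q) (hpr : p ≠ r)
    (hqr : q ≠ r) (hp : p.rev = r) (hq : q.rev = q) (x : F) :
    (rootElt p q r x)ᵀ * Jmat F N * rootElt p q r x = Jmat F N := by
  have hr : r.rev = p := by rw [← hp, Fin.rev_rev]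
  have e1 : (rootElt p q r x)ᵀ * Jmat F N = Jmat F N
      + (Matrix.single q r x + Matrix.single r q (-x) + Matrix.single r r (-(x ^ 2 / 2))) := by
    simp only [rootElt, Matrix.transpose_add, Matrix.transpose_one, Matrix.transpose_single,
      add_mul, one_mul, single_mul_Jmat, hp, hq]
  have e2 : Jmat F N * rootElt p q r x = Jmat F N
      + (Matrix.single r q x + Matrix.single q r (-x) + Matrix.single r r (-(x ^ 2 / 2))) := by
    simp only [rootElt, mul_add, mul_one, Jmat_mul_single, hp, hq]
  have e3 : (Matrix.single q r x + Matrix.single r q (-x) + Matrix.single r r (-(x ^ 2 / 2)))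
      * (Matrix.single p q x + Matrix.single q r (-x) + Matrix.single p r (-(x ^ 2 / 2)))
      = Matrix.single r r (x ^ 2) := by
    simp [mul_add, add_mul, hpq.symm, hpr.symm, hqr.symm, sq]
  rw [e1, add_mul, e2, rootElt, mul_add, e3, mul_one]
  have e4 : (Matrix.single r r (x ^ 2) : Matrix (Fin N) (Fin N) F)
      = Matrix.single r r (x ^ 2 / 2) + Matrix.single r r (x ^ 2 / 2) := by
    rw [← Matrix.single_add]; congr 1; field_simp; norm_num
  rw [e4]
  have e5 : ∀ (i j : Fin N) (c : F), Matrix.single i j (-c) = -Matrix.single i j c :=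
    fun i j c => (Matrix.single_neg i j c).symm
  simp only [e5]
  abel

lemma rootElt_mem {l : ℕ} (h2 : (2 : F) ≠ 0) (p q r : Fin (2 * l + 1)) (hp : (p : ℕ) < l)
    (hq : (q : ℕ) = l) (hr : (r : ℕ) = 2 * l - p) (x : F) : VlMem l (rootElt p q r x) := by
  have entry : ∀ i j : Fin (2 * l + 1), ¬ blockOf3 l (i : ℕ) < blockOf3 l (j : ℕ) →
      rootElt p q r x i j = (if i = j then 1 else 0) := by
    intro i j hij
    have h1 : ¬ (p = i ∧ q = j) := by
      rintro ⟨rfl, rfl⟩; apply hij; simp [blockOf3, hp, hq]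
    have h2 : ¬ (q = i ∧ r = j) := by
      rintro ⟨rfl, rfl⟩; apply hij; unfold blockOf3; split_ifs <;> omega
    have h3 : ¬ (p = i ∧ r = j) := by
      rintro ⟨rfl, rfl⟩; apply hij; unfold blockOf3; split_ifs <;> omega
    simp [rootElt, Matrix.one_apply, h1, h2, h3]
  refine ⟨⟨?_, ?_⟩, entry⟩
  · have htri : (rootElt p q r x).IsUpperTriangular := by
      intro i j hij
      have hij' : (j : ℕ) < i := hij
      rw [entry i j (by unfold blockOf3; split_ifs <;> omega), if_neg (by omega)]
    rw [Matrix.det_of_isUpperTriangular htri]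
    exact Finset.prod_eq_one fun i _ => by rw [entry i i (lt_irrefl _), if_pos rfl]
  · apply rootElt_form h2 <;> simp only [ne_eq, Fin.ext_iff, Fin.val_rev] <;> omega

/-! ### The lower left block of an element of the cell `Q_l w_l V_l` -/

/-- Each column of `w_l` has a single nonzero entry: its row is `j + l + 1` for `j < l`, `l` for
`j = l`, and `j - (l + 1)` for `j > l`. -/
lemma mul_wlMat_apply {l : ℕ} (P : Matrix (Fin (2 * l + 1)) (Fin (2 * l + 1)) F)
    (i j : Fin (2 * l + 1)) : (P * wlMat F l) i j =
      if h : (j : ℕ) < l then P i ⟨j + l + 1, by omega⟩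
      else if (j : ℕ) = l then P i j * (-1) ^ l else P i ⟨j - (l + 1), by omega⟩ := by
  split_ifs with h1 h2
  · rw [mul_apply_col _ _ i j ⟨j + l + 1, by omega⟩]
    · have h3 : ¬ (j : ℕ) + l + 1 < l := by omega
      have h4 : ¬ (j : ℕ) + l + 1 = l := by omega
      simp [wlMat, h3, h4]
    · intro k hk
      rw [ne_eq, Fin.ext_iff] at hk
      simp only [wlMat, Matrix.of_apply, Fin.ext_iff] at hk ⊢
      split_ifs <;> first | rfl | (exfalso; omega)
  · rw [mul_apply_col _ _ i j j]
    · simp [wlMat, h2]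
    · intro k hk
      rw [ne_eq, Fin.ext_iff] at hk
      simp only [wlMat, Matrix.of_apply, Fin.ext_iff]
      split_ifs <;> first | rfl | (exfalso; omega)
  · rw [mul_apply_col _ _ i j ⟨j - (l + 1), by omega⟩]
    · have h3 : (j : ℕ) - (l + 1) < l := by omega
      have h4 : (j : ℕ) = (j : ℕ) - (l + 1) + l + 1 := by omega
      simp [wlMat, h3, ← h4]
    · intro k hk
      rw [ne_eq, Fin.ext_iff] at hk
      simp only [wlMat, Matrix.of_apply, Fin.ext_iff] at hk ⊢
      split_ifs <;> first | rfl | (exfalso; omega)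

/-- The lower left `l × l` block of `l_l(A)·n₁·w_l·n₂` is `A*`. -/
lemma cell_lower_left {l : ℕ} (A : Matrix (Fin l) (Fin l) F)
    (n₁ n₂ : Matrix (Fin (2 * l + 1)) (Fin (2 * l + 1)) F) (h₁ : VlMem l n₁) (h₂ : VlMem l n₂)
    (i j : Fin l) :
    (llMat l A * n₁ * wlMat F l * n₂) ⟨l + 1 + i, by omega⟩ ⟨j, by omega⟩ = astar A i j := by
  rw [mul_apply_col _ n₂ _ _ ⟨j, by omega⟩, mul_wlMat_apply, dif_pos j.2,
    h₂.2 _ _ (lt_irrefl _), if_pos rfl, mul_one, Matrix.mul_apply,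
    Finset.sum_eq_single ⟨l + 1 + j, by omega⟩]
  · rw [h₁.2]
    · have h3 : ¬ l + 1 + (i : ℕ) < l := by omega
      have h4 : ¬ l + 1 + (i : ℕ) = l := by omega
      have h5 : l + 1 + (j : ℕ) = j + l + 1 := by omega
      simp [llMat, h3, h4, h5, ent]
    · simp only [blockOf3]; split_ifs <;> omega
  · intro k _ hk
    rw [ne_eq, Fin.ext_iff] at hk
    by_cases hkl : l + 1 ≤ (k : ℕ)
    · rw [h₁.2, if_neg, mul_zero]
      · simp only [Fin.ext_iff] at hk ⊢; omega
      · simp only [blockOf3]; split_ifs <;> omega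
    · have h3 : ¬ l + 1 + (i : ℕ) < l := by omega
      have h4 : ¬ l + 1 + (i : ℕ) = l := by omega
      simp only [llMat, Matrix.of_apply, h3, h4, hkl, if_false, zero_mul]
  · simp
  · intro k hk
    rw [h₂.2, if_neg hk]
    simp only [blockOf3]; split_ifs <;> omega

/-! ### The embedding `j` -/

lemma Mmat_mul_apply {l : ℕ} (hl : 1 ≤ l) (ρ : F) (P : Matrix (Fin (2 * l + 1)) (Fin (2 * l + 1)) F)
    (i j : Fin (2 * l + 1)) : (Mmat F l ρ * P) i j =
      if (i : ℕ) = l - 1 then P ⟨l, by omega⟩ j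
      else if (i : ℕ) = l then
        1 / 2 * P ⟨l - 1, by omega⟩ j + 1 / (2 * (ρ / 2)) * P ⟨l + 1, by omega⟩ j
      else if (i : ℕ) = l + 1 then
        1 / 2 * P ⟨l - 1, by omega⟩ j + -(1 / (2 * (ρ / 2))) * P ⟨l + 1, by omega⟩ j
      else P i j := by
  have a1 : ¬ l = l - 1 := by omega
  have a2 : ¬ l + 1 = l - 1 := by omega
  split_ifs with h1 h2 h3
  · rw [mul_apply_row _ _ i j ⟨l, by omega⟩]
    · simp [Mmat, h1]
    · intro k hk
      simp only [ne_eq, Fin.ext_iff] at hk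
      simp [Mmat, h1, hk]
  · rw [Matrix.mul_apply, sum_two _ ⟨l - 1, by omega⟩ ⟨l + 1, by omega⟩]
    · simp [Mmat, h2, a1, a2]
    · simp only [ne_eq, Fin.ext_iff]; omega
    · intro k hk hk'
      simp only [ne_eq, Fin.ext_iff] at hk hk'
      simp [Mmat, h2, a1, hk, hk']
  · rw [Matrix.mul_apply, sum_two _ ⟨l - 1, by omega⟩ ⟨l + 1, by omega⟩]
    · simp [Mmat, h3, a2]
    · simp only [ne_eq, Fin.ext_iff]; omega
    · intro k hk hk'
      simp only [ne_eq, Fin.ext_iff] at hk hk'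
      simp [Mmat, h3, a2, hk, hk']
  · rw [mul_apply_row _ _ i j i]
    · simp [Mmat, h1, h2, h3]
    · intro k hk
      simp [Mmat, h1, h2, h3, hk.symm]

lemma mul_Mmat_apply {l : ℕ} (hl : 1 ≤ l) (ρ : F) (P : Matrix (Fin (2 * l + 1)) (Fin (2 * l + 1)) F)
    (i j : Fin (2 * l + 1)) : (P * Mmat F l ρ) i j =
      if (j : ℕ) = l - 1 then P i ⟨l, by omega⟩ * (1 / 2) + P i ⟨l + 1, by omega⟩ * (1 / 2)
      else if (j : ℕ) = l then P i ⟨l - 1, by omega⟩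
      else if (j : ℕ) = l + 1 then
        P i ⟨l, by omega⟩ * (1 / (2 * (ρ / 2))) + P i ⟨l + 1, by omega⟩ * -(1 / (2 * (ρ / 2)))
      else P i j := by
  have a1 : ¬ l = l - 1 := by omega
  have a2 : ¬ l + 1 = l - 1 := by omega
  have a3 : ¬ l - 1 = l := by omega
  have a4 : ¬ l + 1 = l := by omega
  split_ifs with h1 h2 h3
  · rw [Matrix.mul_apply, sum_two _ ⟨l, by omega⟩ ⟨l + 1, by omega⟩]
    · simp [Mmat, h1, a1, a2]
    · simp only [ne_eq, Fin.ext_iff]; omega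
    · intro k hk hk'
      simp only [ne_eq, Fin.ext_iff] at hk hk'
      have : ¬ ((k : ℕ) ≠ l - 1 ∧ (k : ℕ) = l - 1) := by tauto
      simp only [Mmat, Matrix.of_apply, Fin.ext_iff, h1, hk, hk', a3, if_false, if_true]
      split_ifs <;> simp
  · rw [mul_apply_col _ _ i j ⟨l - 1, by omega⟩]
    · simp [Mmat, h2]
    · intro k hk
      simp only [ne_eq, Fin.ext_iff] at hk
      simp only [Mmat, Matrix.of_apply, Fin.ext_iff, h2, hk, a1, if_false]
      split_ifs <;> first | rfl | (exfalso; omega)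
  · rw [Matrix.mul_apply, sum_two _ ⟨l, by omega⟩ ⟨l + 1, by omega⟩]
    · simp [Mmat, h3, a1, a2]
    · simp only [ne_eq, Fin.ext_iff]; omega
    · intro k hk hk'
      simp only [ne_eq, Fin.ext_iff] at hk hk'
      simp only [Mmat, Matrix.of_apply, Fin.ext_iff, h3, hk, hk', a2, a4, if_false]
      split_ifs <;> simp
  · rw [mul_apply_col _ _ i j j]
    · simp [Mmat, h1, h2, h3]
    · intro k hk
      simp [Mmat, h1, h2, h3, hk]

/-- The inverse of `M`. -/
def MmatInv (F : Type*) [Field F] (l : ℕ) (ρ : F) : Matrix (Fin (2*l+1)) (Fin (2*l+1)) F :=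
  Matrix.of fun i j =>
    if (i : ℕ) = l - 1 then (if (j : ℕ) = l then 1 else if (j : ℕ) = l + 1 then 1 else 0)
    else if (i : ℕ) = l then (if (j : ℕ) = l - 1 then 1 else 0)
    else if (i : ℕ) = l + 1 then
      (if (j : ℕ) = l then ρ / 2 else if (j : ℕ) = l + 1 then -(ρ / 2) else 0)
    else if i = j then 1 else 0

lemma Mmat_mul_inv {l : ℕ} (hl : 1 ≤ l) {ρ : F} (h2 : (2 : F) ≠ 0) (hρ0 : ρ ≠ 0) :
    Mmat F l ρ * MmatInv F l ρ = 1 := by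
  obtain ⟨k, rfl⟩ : ∃ k, l = k + 1 := ⟨l - 1, by omega⟩
  ext i j
  rw [Mmat_mul_apply hl, Matrix.one_apply]
  simp only [MmatInv, Matrix.of_apply, Fin.ext_iff, Nat.add_sub_cancel]
  split_ifs <;> first | rfl | (exfalso; omega) | (field_simp; try norm_num)

/-- The matrix `j(h)` for `h` preserving the span of the two middle basis vectors and the span of
the others: it agrees with `ĥ` away from the middle three indices, and its middle `3 × 3` block is
the image of the middle `2 × 2` block of `h`. -/
def jExplicit (l : ℕ) (ρ : F) (h : Matrix (Fin (2*l)) (Fin (2*l)) F) :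
    Matrix (Fin (2*l+1)) (Fin (2*l+1)) F :=
  Matrix.of fun i j =>
    if (i : ℕ) = l - 1 then
      (if (j : ℕ) = l - 1 then (1 + ent h l l) / 2 else if (j : ℕ) = l then ent h l (l - 1)
        else if (j : ℕ) = l + 1 then (1 - ent h l l) / ρ else 0)
    else if (i : ℕ) = l then
      (if (j : ℕ) = l - 1 then ent h (l - 1) l / 2 else if (j : ℕ) = l then ent h (l - 1) (l - 1)
        else if (j : ℕ) = l + 1 then -ent h (l - 1) l / ρ else 0)
    else if (i : ℕ) = l + 1 then
      (if (j : ℕ) = l - 1 then ρ / 2 * (1 - ent h l l) / 2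
        else if (j : ℕ) = l then -(ρ / 2) * ent h l (l - 1)
        else if (j : ℕ) = l + 1 then (1 + ent h l l) / 2 else 0)
    else if (j : ℕ) = l - 1 ∨ (j : ℕ) = l ∨ (j : ℕ) = l + 1 then 0
    else ent h (if (i : ℕ) < l then (i : ℕ) else (i : ℕ) - 1)
      (if (j : ℕ) < l then (j : ℕ) else (j : ℕ) - 1)

lemma jmap_eq {l : ℕ} (hl : 1 ≤ l) {ρ : F} (h2 : (2 : F) ≠ 0) (hρ0 : ρ ≠ 0)
    (h : Matrix (Fin (2*l)) (Fin (2*l)) F)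
    (hz : ∀ i j : ℕ, ¬ ((i = l - 1 ∨ i = l) ↔ (j = l - 1 ∨ j = l)) → ent h i j = 0) :
    jmap l ρ h = jExplicit l ρ h := by
  have hM := Mmat_mul_inv hl h2 hρ0
  rw [jmap, Matrix.inv_eq_right_inv hM, Matrix.mul_assoc]
  suffices e : hatg l h * Mmat F l ρ = Mmat F l ρ * jExplicit l ρ h by
    rw [e, ← Matrix.mul_assoc, mul_eq_one_comm.1 hM, Matrix.one_mul]
  obtain ⟨k, rfl⟩ : ∃ k, l = k + 1 := ⟨l - 1, by omega⟩
  ext i j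
  rw [Mmat_mul_apply hl, mul_Mmat_apply hl]
  simp only [Nat.add_sub_cancel] at hz ⊢
  -- off the middle block the row and column maps are the identity, and `hz` kills the mixed entries
  have hz' : ∀ i j : ℕ, i = k ∨ i = k + 1 → j < k ∨ k + 1 < j → ent h i j = 0 ∧ ent h j i = 0 :=
    fun i j hi hj => ⟨hz i j (by omega), hz j i (by omega)⟩
  have a5 : ¬ k + 1 + 1 = k := by omega
  by_cases hi : (i : ℕ) = k ∨ (i : ℕ) = k + 1 ∨ (i : ℕ) = k + 2 <;>
  by_cases hj : (j : ℕ) = k ∨ (j : ℕ) = k + 1 ∨ (j : ℕ) = k + 2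
  · rcases hi with hi | hi | hi <;> rcases hj with hj | hj | hj <;>
      simp [hatg, jExplicit, hi, hj, Fin.ext_iff, a5] <;> field_simp <;> ring
  · have hj' : ∀ i, i = k ∨ i = k + 1 →
        ent h i (if (j : ℕ) ≤ k then (j : ℕ) else (j : ℕ) - 1) = 0 :=
      fun i hi => (hz' i _ hi (by split_ifs <;> omega)).1
    have h0 := hj' k (Or.inl rfl)
    have h1 := hj' (k + 1) (Or.inr rfl)
    push Not at hj
    rcases hi with hi | hi | hi <;>
      simp [hatg, jExplicit, hi, hj, Fin.ext_iff, a5, h0, h1, hj.2.1.symm]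
  · have hi' : ∀ j, j = k ∨ j = k + 1 →
        ent h (if (i : ℕ) ≤ k then (i : ℕ) else (i : ℕ) - 1) j = 0 :=
      fun j hj => (hz' j _ hj (by split_ifs <;> omega)).2
    have h0 := hi' k (Or.inl rfl)
    have h1 := hi' (k + 1) (Or.inr rfl)
    push Not at hi
    rcases hj with hj | hj | hj <;>
      simp [hatg, jExplicit, hi, hj, Fin.ext_iff, h0, h1]
  · push Not at hi hj
    simp [hatg, jExplicit, hi, hj]

/-! ### The entries of `t·w` -/

/-- Each column of `w̃_n` has a single nonzero entry. -/
lemma mul_wtmat2l_apply {l n : ℕ} (hn : n ≤ l - 1) (hl : 1 ≤ l)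
    (P : Matrix (Fin (2 * l)) (Fin (2 * l)) F) (i j : Fin (2 * l)) :
    (P * wtmat2l F l n) i j =
      if h : (j : ℕ) < n then P i ⟨j + (2 * l - n), by omega⟩
      else if 2 * l - n ≤ (j : ℕ) then P i ⟨j - (2 * l - n), by omega⟩
      else P i j * (if (j : ℕ) = l - 1 then (-1) ^ n else 1) := by
  have key : ∀ k : Fin (2 * l), (∀ k' : Fin (2 * l), k' ≠ k → wtmat2l F l n k' j = 0) →
      (P * wtmat2l F l n) i j = P i k * wtmat2l F l n k j := fun k => mul_apply_col _ _ i j k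
  have zero : ∀ k : Fin (2 * l), (k : ℕ) = (if (j : ℕ) < n then j + (2 * l - n)
      else if 2 * l - n ≤ (j : ℕ) then j - (2 * l - n) else (j : ℕ)) →
      ∀ k' : Fin (2 * l), k' ≠ k → wtmat2l F l n k' j = 0 := by
    intro k hk k' hk'
    rw [ne_eq, Fin.ext_iff, hk] at hk'
    have := k'.2
    have := j.2
    simp only [wtmat2l, Matrix.of_apply, Fin.ext_iff]
    generalize (k' : ℕ) = x at *
    generalize (j : ℕ) = y at *
    clear key hk
    split_ifs at hk' ⊢ <;> first | rfl | (exfalso; omega)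
  split_ifs with h1 h2 h3
  · rw [key ⟨j + (2 * l - n), by omega⟩ (zero _ (by rw [if_pos h1]))]
    have : wtmat2l F l n ⟨j + (2 * l - n), by omega⟩ j = 1 := by
      simp only [wtmat2l, Matrix.of_apply]
      rw [if_neg (by omega), if_neg (by omega), if_neg (by omega), if_neg (by omega),
        if_neg (by omega), if_pos trivial]
    rw [this, mul_one]
  · rw [key ⟨j - (2 * l - n), by omega⟩ (zero _ (by rw [if_neg h1, if_pos h2]))]
    have : wtmat2l F l n ⟨j - (2 * l - n), by omega⟩ j = 1 := by
      simp only [wtmat2l, Matrix.of_apply]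
      rw [if_pos (by omega), if_pos (by omega)]
    rw [this, mul_one]
  · rw [key j (zero _ (by rw [if_neg h1, if_neg h2]))]
    have h4 : ¬ l - 1 < n := by omega
    simp [wtmat2l, h3, h4]
  · rw [key j (zero _ (by rw [if_neg h1, if_neg h2]))]
    have h4 : (j : ℕ) < 2 * l - n := by omega
    simp [wtmat2l, h3, h1, h4]

lemma wElt_apply {l n : ℕ} (hl : 1 ≤ l) (hn : n ≤ l - 1) (σ : Matrix (Fin n) (Fin n) F)
    (i j : Fin (2 * l)) : wElt l n σ i j =
      if (i : ℕ) < n then (if 2 * l - n ≤ (j : ℕ) then ent σ i (j - (2 * l - n)) else 0)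
      else if 2 * l - n ≤ (i : ℕ) then
        (if (j : ℕ) < n then ent (astar σ) (i - (2 * l - n)) j else 0)
      else if (i : ℕ) = j then (if (i : ℕ) = l - 1 then (-1) ^ n else 1) else 0 := by
  -- for `n = 0` the product `t_n(σ)·w̃_n` is the identity, so no separate treatment is needed
  have hw : wElt l n σ = tnMat l n σ * wtmat2l F l n := by
    rw [wElt]
    split_ifs with h0
    · subst h0
      have e1 : tnMat l 0 σ = 1 := by
        ext i j
        have : ¬ 2 * l ≤ (i : ℕ) := by omega
        simp [tnMat, Matrix.one_apply, this]
      have e2 : wtmat2l F l 0 = 1 := by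
        ext i j
        simp [wtmat2l, Matrix.one_apply]
      rw [e1, e2, Matrix.one_mul]
    · rfl
  rw [hw, mul_wtmat2l_apply hn hl]
  by_cases hi1 : (i : ℕ) < n
  · rw [if_pos hi1]
    split_ifs with h1 h2 h3 h4 <;> simp only [tnMat, Matrix.of_apply, Fin.ext_iff]
    all_goals first | (exfalso; omega) | skip
    · rw [if_neg (by omega), if_neg (by omega), if_neg (by omega)]
    · rw [if_pos (by omega)]
    · rw [if_neg (by omega), if_neg (by omega), if_neg (by omega), zero_mul]
    · rw [if_neg (by omega), if_neg (by omega), if_neg (by omega), zero_mul]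
  by_cases hi2 : 2 * l - n ≤ (i : ℕ)
  · rw [if_neg hi1, if_pos hi2]
    split_ifs with h1 h2 h3 <;> simp only [tnMat, Matrix.of_apply, Fin.ext_iff]
    · rw [if_neg (by omega), if_pos (by omega), Nat.add_sub_cancel]
    · rw [if_neg (by omega), if_neg (by omega), if_neg (by omega)]
    · rw [if_neg (by omega), if_neg (by omega), if_neg (by omega), zero_mul]
    · rw [if_neg (by omega), if_neg (by omega), if_neg (by omega), zero_mul]
  · have e : ∀ k, tnMat l n σ i k = if i = k then 1 else 0 := fun k => by
      simp only [tnMat, Matrix.of_apply]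
      rw [if_neg (by omega), if_neg (by omega)]
    rw [if_neg hi1, if_neg hi2]
    simp only [e, Fin.ext_iff]
    by_cases hij : (i : ℕ) = j
    · rw [dif_neg (by omega), if_neg (by omega)]
      simp [hij]
    · rw [if_neg hij, if_neg hij]
      split_ifs <;> first | (exfalso; omega) | simp

lemma tw_ent {l n : ℕ} (hl : 1 ≤ l) (hn : n ≤ l - 1) (σ : Matrix (Fin n) (Fin n) F)
    (t : ℕ → Fˣ) (a b ρ : F) (i j : ℕ) (hi : i < 2 * l) (hj : j < 2 * l) :
    ent (torusMat l t a b ρ * wElt l n σ) i j =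
      if i = l - 1 then (if j = l - 1 then a * (-1) ^ n else if j = l then b * ρ else 0)
      else if i = l then (if j = l - 1 then b * (-1) ^ n else if j = l then a else 0)
      else (if i < l - 1 then (t i : F) else ((t (2 * l - 1 - i))⁻¹ : F)) *
        (if i < n then (if 2 * l - n ≤ j then ent σ i (j - (2 * l - n)) else 0)
          else if 2 * l - n ≤ i then (if j < n then ent (astar σ) (i - (2 * l - n)) j else 0)
          else if i = j then 1 else 0) := by
  rw [ent_eq _ hi hj]
  have a1 : ¬ l = l - 1 := by omega
  have a2 : ¬ l - 1 < n := by omega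
  have a3 : ¬ 2 * l - n ≤ l - 1 := by omega
  have a4 : ¬ l < n := by omega
  have a5 : ¬ 2 * l - n ≤ l := by omega
  have a6 : ¬ l - 1 = l := by omega
  by_cases hc : i = l - 1 ∨ i = l
  · rw [Matrix.mul_apply, sum_two _ ⟨l - 1, by omega⟩ ⟨l, by omega⟩]
    · rw [wElt_apply hl hn, wElt_apply hl hn]
      rcases hc with rfl | rfl
      · simp only [torusMat, Matrix.of_apply, a1, a2, a3, a4, a5, if_true, if_false]
        split_ifs <;> first | (exfalso; omega) | simp
      · simp only [torusMat, Matrix.of_apply, a1, a2, a3, a4, a5, if_true, if_false]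
        split_ifs <;> first | (exfalso; omega) | simp
    · simpa [Fin.ext_iff] using a6
    · intro k hk hk'
      simp only [ne_eq, Fin.ext_iff] at hk hk'
      rcases hc with rfl | rfl <;> simp [torusMat, hk, hk']
  · push Not at hc
    rw [mul_apply_row _ _ _ _ ⟨i, hi⟩, wElt_apply hl hn]
    · simp [torusMat, hc]
    · intro k hk
      simp [torusMat, hc, hk.symm]

lemma tw_center {l n : ℕ} (hl : 1 ≤ l) (hn : n ≤ l - 1) (σ : Matrix (Fin n) (Fin n) F)
    (t : ℕ → Fˣ) (a b ρ : F) (i j : ℕ) (h : ¬ ((i = l - 1 ∨ i = l) ↔ (j = l - 1 ∨ j = l))) :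
    ent (torusMat l t a b ρ * wElt l n σ) i j = 0 := by
  by_cases hij : i < 2 * l ∧ j < 2 * l
  · rw [tw_ent hl hn _ _ _ _ _ _ _ hij.1 hij.2]
    split_ifs <;> first | (exfalso; omega) | simp
  · exact dif_neg hij

/-- The lower left `l × l` block of `j(t·w)`. -/
lemma jmap_lower_left {l n : ℕ} (hl : 1 ≤ l) (hn : n ≤ l - 1) {ρ : F} (h2 : (2 : F) ≠ 0)
    (hρ0 : ρ ≠ 0) (σ : Matrix (Fin n) (Fin n) F) (t : ℕ → Fˣ) (a b : F) (i j : Fin l) :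
    jmap l ρ (torusMat l t a b ρ * wElt l n σ) ⟨l + 1 + i, by omega⟩ ⟨j, by omega⟩ =
      if (i : ℕ) = 0 then (if (j : ℕ) = l - 1 then (ρ / 2) * (1 - a) / 2 else 0)
      else if l - n ≤ (i : ℕ) ∧ (j : ℕ) < n then
        ((t (l - 1 - i))⁻¹ : F) * ent (astar σ) (i - (l - n)) j
      else 0 := by
  rw [jmap_eq hl h2 hρ0 _ (tw_center hl hn _ _ _ _ _)]
  have hc : ent (torusMat l t a b ρ * wElt l n σ) l l = a := by
    rw [tw_ent hl hn _ _ _ _ _ _ _ (by omega) (by omega), if_neg (by omega), if_pos rfl,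
      if_neg (by omega), if_pos rfl]
  simp only [jExplicit, Matrix.of_apply, hc]
  by_cases hi : (i : ℕ) = 0
  · have a1 : ¬ l + 1 = l - 1 := by omega
    have a2 : ¬ (j : ℕ) = l := by omega
    have a3 : ¬ (j : ℕ) = l + 1 := by omega
    simp [hi, a1, a2, a3]
  · rw [if_neg (by omega), if_neg (by omega), if_neg (by omega), if_neg hi]
    by_cases hj : (j : ℕ) = l - 1
    · rw [if_pos (by omega), if_neg (by omega)]
    · rw [if_neg (by omega), if_neg (by omega), if_pos j.2,
        tw_ent hl hn _ _ _ _ _ _ _ (by omega) (by omega), if_neg (by omega), if_neg (by omega),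
        if_neg (by omega), if_neg (by omega)]
      have e1 : 2 * l - 1 - (l + 1 + (i : ℕ) - 1) = l - 1 - i := by omega
      have e2 : l + 1 + (i : ℕ) - 1 - (2 * l - n) = i - (l - n) := by omega
      rw [e1, e2]
      split_ifs <;> first | (exfalso; omega) | simp

/-! ### The explicit factorization of `j(t·w)` -/

lemma IsPermMat.mul_inv {n : ℕ} {σ : Matrix (Fin n) (Fin n) F} (hσ : IsPermMat σ) :
    σ * σ⁻¹ = 1 := by
  obtain ⟨τ, hτ⟩ := hσ
  have h : σ * σᵀ = 1 := by
    ext i j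
    rw [mul_apply_row _ _ i j (τ i) (fun k hk => by rw [hτ, if_neg hk]), Matrix.transpose_apply,
      hτ, hτ, if_pos rfl, one_mul, Matrix.one_apply]
    simp
  rw [Matrix.inv_eq_right_inv h, h]

/-- The matrix `A` in the decomposition `j(t·w) = l_l(A)·n₁·w_l·n₂`: with respect to the row sizes
`(l-1, 1)` and the column sizes `(1, l-1)` it is `[[0, diag(t₁,…,t_{l-1})·σ], [c⁻¹, 0]]`. -/
def cellA (l : ℕ) (c : F) (t : ℕ → Fˣ) {n : ℕ} (σ : Matrix (Fin n) (Fin n) F) :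
    Matrix (Fin l) (Fin l) F :=
  Matrix.of fun i j =>
    if (i : ℕ) = l - 1 then (if (j : ℕ) = 0 then c⁻¹ else 0)
    else if (j : ℕ) = 0 then 0 else (t i : F) * ent σ i (j - 1)

/-- The inverse of `cellA` when `c ≠ 0` and `σ` is invertible. -/
def cellAInv (l : ℕ) (c : F) (t : ℕ → Fˣ) {n : ℕ} (σ : Matrix (Fin n) (Fin n) F) :
    Matrix (Fin l) (Fin l) F :=
  Matrix.of fun i j =>
    if (i : ℕ) = 0 then (if (j : ℕ) = l - 1 then c else 0)
    else if (j : ℕ) = l - 1 then 0 else ((t j)⁻¹ : F) * ent σ⁻¹ (i - 1) j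

lemma cellA_mul_inv {n : ℕ} {c : F} (hc : c ≠ 0) (t : ℕ → Fˣ) {σ : Matrix (Fin n) (Fin n) F}
    (hσ : σ * σ⁻¹ = 1) : cellA (n + 1) c t σ * cellAInv (n + 1) c t σ = 1 := by
  ext i j
  rw [Matrix.mul_apply, Fin.sum_univ_succ]
  induction i using Fin.lastCases with
  | last =>
    induction j using Fin.lastCases with
    | last => simp [cellA, cellAInv, hc]
    | cast j =>
      have h1 : ¬ (j : ℕ) = n := by omega
      rw [Matrix.one_apply_ne (by simp only [ne_eq, Fin.ext_iff, Fin.val_last, Fin.val_castSucc]; omega)]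
      simp [cellA, cellAInv, h1]
  | cast i =>
    have h0 : ¬ (i : ℕ) = n := by omega
    induction j using Fin.lastCases with
    | last =>
      rw [Matrix.one_apply_ne (by simp only [ne_eq, Fin.ext_iff, Fin.val_last, Fin.val_castSucc]; omega)]
      simp [cellA, cellAInv, h0]
    | cast j =>
      have h1 : ¬ (j : ℕ) = n := by omega
      have h2 : ∑ k : Fin n, (t i : F) * σ i k * (((t j)⁻¹ : F) * σ⁻¹ k j)
          = (t i : F) * ((t j)⁻¹ : F) * (σ * σ⁻¹) i j := by
        rw [Matrix.mul_apply, Finset.mul_sum]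
        exact Finset.sum_congr rfl fun k _ => by ring
      rw [hσ] at h2
      have h3 : (t i : F) * ((t j)⁻¹ : F) * (1 : Matrix (Fin n) (Fin n) F) i j
          = (1 : Matrix (Fin (n + 1)) (Fin (n + 1)) F) i.castSucc j.castSucc := by
        by_cases hij : i = j
        · subst hij; simp
        · simp [hij]
      rw [← h3, ← h2]
      simp [cellA, cellAInv, h0, h1, ent]

lemma astar_cellA {l n : ℕ} (hl : 1 ≤ l) (hn : n = l - 1) {ρ a : F}
    (hc : ρ / 2 * (1 - a) / 2 ≠ 0) (t : ℕ → Fˣ)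
    {σ : Matrix (Fin n) (Fin n) F} (hσ : σ * σ⁻¹ = 1) :
    (cellA l (ρ / 2 * (1 - a) / 2) t σ).det ≠ 0 ∧
      astar (cellA l (ρ / 2 * (1 - a) / 2) t σ) = Aspec l ρ a t σ := by
  obtain rfl : l = n + 1 := by omega
  have h := cellA_mul_inv hc t hσ
  refine ⟨?_, ?_⟩
  · intro h0
    have := congrArg Matrix.det h
    rw [Matrix.det_mul, h0, zero_mul, Matrix.det_one] at this
    exact zero_ne_one this
  · ext i j
    rw [astar_apply, Matrix.inv_eq_right_inv h]
    simp only [cellAInv, Aspec, Matrix.of_apply, Fin.val_rev]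
    by_cases hj : (j : ℕ) = n <;> by_cases hi : (i : ℕ) = 0
    · rw [if_pos (by omega), if_pos (by omega), if_pos hi, if_pos (by omega)]
    · rw [if_pos (by omega), if_neg (by omega), if_neg hi, if_pos (by omega)]
    · rw [if_neg (by omega), if_pos (by omega), if_pos hi, if_neg (by omega)]
    · rw [if_neg (by omega), if_neg (by omega), if_neg hi, if_neg (by omega),
        ent_eq σ⁻¹ (by omega) (by omega), ent_eq (astar σ) (by omega) (by omega), astar_apply]
      have e1 : n + 1 - ((i : ℕ) + 1) = n + 1 - 2 - ((i : ℕ) - 1) := by omega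
      congr 2
      · rw [e1]
      · refine congrArg₂ (fun x y => σ⁻¹ x y) ?_ ?_ <;> (ext; simp only [Fin.val_rev]; omega)

/-- The entries of `L·n₁·w_l·n₂`, where `n₁` and `n₂` are the root elements attached to
the index triples `(0, l, 2l)` and `(l-1, l, l+1)`. -/
lemma mul_cell_apply {l : ℕ} (hl : 2 ≤ l) (L : Matrix (Fin (2 * l + 1)) (Fin (2 * l + 1)) F)
    (x y : F) (i j : Fin (2 * l + 1)) :
    (L * (rootElt ⟨0, by omega⟩ ⟨l, by omega⟩ ⟨2 * l, by omega⟩ y :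
        Matrix (Fin (2 * l + 1)) (Fin (2 * l + 1)) F) * wlMat F l *
      (rootElt ⟨l - 1, by omega⟩ ⟨l, by omega⟩ ⟨l + 1, by omega⟩ x :
        Matrix (Fin (2 * l + 1)) (Fin (2 * l + 1)) F)) i j =
    if h : (j : ℕ) < l - 1 then L i ⟨j + l + 1, by omega⟩
    else if (j : ℕ) = l - 1 then
      L i ⟨2 * l, by omega⟩ - y * L i ⟨l, by omega⟩ - y ^ 2 / 2 * L i ⟨0, by omega⟩
    else if (j : ℕ) = l then (-1) ^ l * (L i ⟨l, by omega⟩ + y * L i ⟨0, by omega⟩) +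
      x * (L i ⟨2 * l, by omega⟩ - y * L i ⟨l, by omega⟩ - y ^ 2 / 2 * L i ⟨0, by omega⟩)
    else if (j : ℕ) = l + 1 then
      L i ⟨0, by omega⟩ - x * ((-1) ^ l * (L i ⟨l, by omega⟩ + y * L i ⟨0, by omega⟩)) -
      x ^ 2 / 2 * (L i ⟨2 * l, by omega⟩ - y * L i ⟨l, by omega⟩ - y ^ 2 / 2 * L i ⟨0, by omega⟩)
    else L i ⟨j - (l + 1), by omega⟩ := by
  have b1 : ¬ 2 * l = l := by omega
  have b2 : ¬ l = 2 * l := by omega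
  have b3 : ¬ 0 = l := by omega
  have b4 : ¬ 0 = 2 * l := by omega
  have b5 : ¬ l = l + 1 := by omega
  have b6 : l - 1 < l := by omega
  have b7 : l - 1 + l + 1 = 2 * l := by omega
  simp only [mul_rootElt_apply, mul_wlMat_apply, Fin.ext_iff, lt_irrefl, dite_false, if_true,
    b1, b2, b6, b7, dite_true, if_false]
  split_ifs with h1 h2 h3 h4 h5 h6 h7 h8 h9 <;> first | (exfalso; omega) | skip
  · have e : (⟨(j : ℕ) + l + 1, by omega⟩ : Fin (2 * l + 1)) = ⟨2 * l, by omega⟩ := by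
      ext; assumption
    rw [e]; ring
  · ring
  · have e : j = ⟨l, by omega⟩ := by ext; assumption
    rw [← e]; ring
  · have e : (⟨(j : ℕ) - (l + 1), by omega⟩ : Fin (2 * l + 1)) = ⟨0, by omega⟩ := by
      ext; simp only; omega
    rw [e]; ring
  · ring

/-- The factorization of `j(t·w)` for `n = l - 1` and `a ≠ 1`. Away from the middle three indices
both sides have the blocks `diag(t₁,…,t_{l-1})·σ` and `diag(t_{l-1}⁻¹,…,t₁⁻¹)·σ*` in the upper right
and lower left corners; on the middle block it is the Bruhat decomposition in `SO_3` of the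
image of the `2 × 2` block `[[ε·a, bρ], [ε·b, a]]`, `ε = (-1)^n`; it dictates the two root parameters and
uses `a² - b²ρ = 1`. -/
lemma jExplicit_factor {l n : ℕ} (hl : 2 ≤ l) (hn : n = l - 1) {ρ a b : F} (h2 : (2 : F) ≠ 0)
    (hρ0 : ρ ≠ 0) (hab : a ^ 2 - b ^ 2 * ρ = 1) (ha : a ≠ 1) (t : ℕ → Fˣ)
    {σ : Matrix (Fin n) (Fin n) F} (hσ : σ * σ⁻¹ = 1) :
    jExplicit l ρ (torusMat l t a b ρ * wElt l n σ) =
      llMat l (cellA l (ρ / 2 * (1 - a) / 2) t σ) *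
      (rootElt ⟨0, by omega⟩ ⟨l, by omega⟩ ⟨2 * l, by omega⟩ (-(b * (ρ / 2))) :
        Matrix (Fin (2 * l + 1)) (Fin (2 * l + 1)) F) * wlMat F l *
      (rootElt ⟨l - 1, by omega⟩ ⟨l, by omega⟩ ⟨l + 1, by omega⟩ (-(2 * (-1) ^ n * b / (1 - a))) :
        Matrix (Fin (2 * l + 1)) (Fin (2 * l + 1)) F) := by
  have ha' : 1 - a ≠ 0 := sub_ne_zero.2 ha.symm
  have hc : ρ / 2 * (1 - a) / 2 ≠ 0 := by
    apply div_ne_zero (mul_ne_zero (div_ne_zero hρ0 h2) ha') h2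
  have hstar := (astar_cellA (by omega) hn hc t hσ).2
  have hsign : ((-1) ^ l : F) = -(-1) ^ n := by
    obtain rfl : l = n + 1 := by omega
    rw [pow_succ]; ring
  have hε : ((-1) ^ n : F) * (-1) ^ n = 1 := by
    rw [← mul_pow]; simp
  have hent := tw_ent (by omega : 1 ≤ l) (by omega : n ≤ l - 1) σ t a b ρ
  have c1 : ¬ l = l - 1 := by omega
  have c2 : ¬ l - 1 = l := by omega
  have e11 : ent (torusMat l t a b ρ * wElt l n σ) (l - 1) (l - 1) = a * (-1) ^ n := by
    rw [hent _ _ (by omega) (by omega), if_pos rfl, if_pos rfl]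
  have e12 : ent (torusMat l t a b ρ * wElt l n σ) (l - 1) l = b * ρ := by
    rw [hent _ _ (by omega) (by omega), if_pos rfl, if_neg c1, if_pos rfl]
  have e21 : ent (torusMat l t a b ρ * wElt l n σ) l (l - 1) = b * (-1) ^ n := by
    rw [hent _ _ (by omega) (by omega), if_neg c1, if_pos rfl, if_pos rfl]
  have e22 : ent (torusMat l t a b ρ * wElt l n σ) l l = a := by
    rw [hent _ _ (by omega) (by omega), if_neg c1, if_pos rfl, if_neg c1, if_pos rfl]
  ext i j
  rw [mul_cell_apply hl]
  simp only [jExplicit, Matrix.of_apply, e11, e12, e21, e22, hsign]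
  generalize ((-1) ^ n : F) = ε at *
  have hρb : b ^ 2 * ρ = a ^ 2 - 1 := by rw [← hab]; ring
  rcases (by omega : (i : ℕ) < l - 1 ∨ (i : ℕ) = l - 1 ∨ (i : ℕ) = l ∨ (i : ℕ) = l + 1 ∨
    l + 1 < (i : ℕ)) with hi | hi | hi | hi | hi
  · have hL : ∀ k, llMat l (cellA l (ρ / 2 * (1 - a) / 2) t σ) i k =
        if 1 ≤ (k : ℕ) ∧ (k : ℕ) < l then (t i : F) * ent σ i (k - 1) else 0 := by
      intro k
      have hi' : (i : ℕ) < l := by omega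
      simp only [llMat, Matrix.of_apply, if_pos hi']
      by_cases hk : (k : ℕ) < l
      · rw [if_pos hk, ent_eq _ hi' hk]
        simp only [cellA, Matrix.of_apply]
        rw [if_neg (by omega)]
        split_ifs <;> first | rfl | (exfalso; omega)
      · rw [if_neg hk, if_neg (by omega)]
    rw [if_neg (by omega), if_neg (by omega), if_neg (by omega)]
    simp only [hL]
    by_cases hj : l + 1 < (j : ℕ)
    · have e : (j : ℕ) - 1 - (2 * l - n) = (j : ℕ) - (l + 1) - 1 := by omega
      rw [if_neg (by omega), if_pos (by omega), if_neg (by omega),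
        hent _ _ (by omega) (by omega), if_neg (by omega), if_neg (by omega), if_pos hi,
        if_pos (by omega), if_pos (by omega), dif_neg (by omega), if_neg (by omega),
        if_neg (by omega), if_neg (by omega), if_pos (by omega), e]
    · by_cases hj' : (j : ℕ) < l - 1
      · rw [if_neg (by omega), if_pos (by omega), if_pos (by omega),
          hent _ _ (by omega) (by omega), if_neg (by omega), if_neg (by omega), if_pos hi,
          if_pos (by omega), if_neg (by omega), mul_zero, dif_pos hj', if_neg (by omega)]
      · have k0 : ¬ (1 ≤ 0 ∧ 0 < l) := by omega
        have k1 : ¬ (1 ≤ l ∧ l < l) := by omega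
        have k2 : ¬ (1 ≤ 2 * l ∧ 2 * l < l) := by omega
        rw [if_pos (by omega), dif_neg hj']
        simp only [k0, k1, k2, if_false]
        split_ifs <;> first | (exfalso; omega) | simp
  · have hL : ∀ k, llMat l (cellA l (ρ / 2 * (1 - a) / 2) t σ) i k =
        if (k : ℕ) = 0 then (ρ / 2 * (1 - a) / 2)⁻¹ else 0 := by
      intro k
      have hi' : (i : ℕ) < l := by omega
      simp only [llMat, Matrix.of_apply, if_pos hi']
      by_cases hk : (k : ℕ) < l
      · rw [if_pos hk, ent_eq _ hi' hk]
        simp only [cellA, Matrix.of_apply]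
        rw [if_pos hi]
      · rw [if_neg hk, if_neg (by omega)]
    have k1 : ¬ l = 0 := by omega
    have k2 : ¬ 2 * l = 0 := by omega
    simp only [hL, if_pos hi, k1, k2, if_false, if_true]
    split_ifs <;> first | rfl | (exfalso; omega) | skip
    · field_simp
      linear_combination hρb
    · field_simp
      linear_combination (-(b * ε)) * hρb
    · field_simp
      linear_combination (-(4 * (1 - a) * (b ^ 2 * ρ) + (b ^ 2 * ρ) ^ 2)) * hε -
        ((1 - a) ^ 2 + 2 * (1 - a) + b ^ 2 * ρ) * hρb
  · have hL : ∀ k, llMat l (cellA l (ρ / 2 * (1 - a) / 2) t σ) i k =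
        if (k : ℕ) = l then 1 else 0 := by
      intro k
      have hi' : ¬ (i : ℕ) < l := by omega
      simp only [llMat, Matrix.of_apply, if_neg hi', if_pos hi, Fin.ext_iff]
      exact if_congr (by omega) rfl rfl
    have k1 : ¬ 0 = l := by omega
    have k2 : ¬ 2 * l = l := by omega
    have k3 : ¬ (i : ℕ) = l - 1 := by omega
    simp only [hL, if_pos hi, k1, k2, k3, if_false, if_true]
    split_ifs <;> first | rfl | (exfalso; omega) | skip
    · field_simp
      ring
    · field_simp
      linear_combination (4 * ε) * hρb
    · field_simp
      linear_combination (8 * (1 - a) * b + 4 * b ^ 3 * ρ) * hε + 4 * b * hρb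
  · have hL : ∀ k, llMat l (cellA l (ρ / 2 * (1 - a) / 2) t σ) i k =
        if (k : ℕ) = 2 * l then ρ / 2 * (1 - a) / 2 else 0 := by
      intro k
      simp only [llMat, Matrix.of_apply, hstar]
      rw [if_neg (by omega), if_neg (by omega)]
      by_cases hk : l + 1 ≤ (k : ℕ)
      · rw [if_pos hk, ent_eq _ (by omega) (by omega)]
        simp only [Aspec, Matrix.of_apply]
        rw [if_pos (by omega)]
        split_ifs <;> first | rfl | (exfalso; omega)
      · rw [if_neg hk, if_neg (by omega)]
    have k1 : ¬ 0 = 2 * l := by omega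
    have k2 : ¬ l = 2 * l := by omega
    have k3 : ¬ (i : ℕ) = l - 1 := by omega
    have k4 : ¬ (i : ℕ) = l := by omega
    simp only [hL, if_pos hi, k1, k2, k3, k4, if_false, if_true]
    split_ifs <;> first | rfl | (exfalso; omega) | skip
    · field_simp
      ring
    · field_simp
      ring
    · field_simp
      linear_combination (2 * (1 - a) * (b ^ 2 * ρ)) * hε + 2 * (1 - a) * hρb
  · have hL : ∀ k, llMat l (cellA l (ρ / 2 * (1 - a) / 2) t σ) i k =
        if l + 1 ≤ (k : ℕ) ∧ (k : ℕ) < 2 * l then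
          ((t (l - 2 - (i - (l + 1) - 1)))⁻¹ : F) *
            ent (astar σ) (i - (l + 1) - 1) (k - (l + 1)) else 0 := by
      intro k
      simp only [llMat, Matrix.of_apply, hstar]
      rw [if_neg (by omega), if_neg (by omega)]
      by_cases hk : l + 1 ≤ (k : ℕ)
      · rw [if_pos hk, ent_eq _ (by omega) (by omega)]
        simp only [Aspec, Matrix.of_apply]
        rw [if_neg (by omega)]
        split_ifs <;> first | rfl | (exfalso; omega)
      · rw [if_neg hk, if_neg (by omega)]
    rw [if_neg (by omega), if_neg (by omega), if_neg (by omega)]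
    simp only [hL]
    by_cases hj' : (j : ℕ) < l - 1
    · have d1 : 2 * l - 1 - ((i : ℕ) - 1) = l - 2 - (i - (l + 1) - 1) := by omega
      have d2 : (i : ℕ) - 1 - (2 * l - n) = i - (l + 1) - 1 := by omega
      have d3 : (j : ℕ) + l + 1 - (l + 1) = j := by omega
      rw [if_neg (by omega), if_neg (by omega), if_pos (by omega),
        hent _ _ (by omega) (by omega), if_neg (by omega), if_neg (by omega), if_neg (by omega),
        if_neg (by omega), if_pos (by omega), if_pos (by omega), dif_pos hj', if_pos (by omega),
        d1, d2, d3]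
    · rw [dif_neg hj']
      by_cases hj : l + 1 < (j : ℕ)
      · rw [if_neg (by omega), if_neg (by omega), if_neg (by omega),
          hent _ _ (by omega) (by omega), if_neg (by omega), if_neg (by omega), if_neg (by omega),
          if_neg (by omega), if_pos (by omega), if_neg (by omega), mul_zero, if_neg (by omega),
          if_neg (by omega), if_neg (by omega), if_neg (by omega)]
      · have k0 : ¬ (l + 1 ≤ 0 ∧ 0 < 2 * l) := by omega
        have k1 : ¬ (l + 1 ≤ l ∧ l < 2 * l) := by omega
        have k2 : ¬ (l + 1 ≤ 2 * l ∧ 2 * l < 2 * l) := by omega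
        rw [if_pos (by omega)]
        simp only [k0, k1, k2, if_false]
        split_ifs <;> first | (exfalso; omega) | simp

end Helpers

/-! ### The criterion and the value of `A*` -/

lemma astar_row_ne_zero {F : Type*} [Field F] {l : ℕ} {A : Matrix (Fin l) (Fin l) F}
    (hA : A.det ≠ 0) (i : Fin l) : ¬ ∀ j, astar A i j = 0 := by
  intro h
  have h0 : A⁻¹.det = 0 := Matrix.det_eq_zero_of_column_eq_zero i.rev fun k => by
    have := h k.rev
    rwa [astar_apply, Fin.rev_rev] at this
  have h1 := congrArg Matrix.det (Matrix.mul_nonsing_inv A (isUnit_iff_ne_zero.2 hA))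
  rw [Matrix.det_mul, h0, mul_zero, Matrix.det_one] at h1
  exact zero_ne_one h1

/-- Proposition 7.2: `j(t·w) ∈ Q_l·w_l·V_l` iff `n = l−1` and `a ≠ 1`;
and in that case, any decomposition `j(t·w) = l_l(A)·n₁·w_l·n₂` has `A*` equal to the
explicit matrix `Aspec`. -/
theorem statement17 (l : ℕ) (hl : 2 ≤ l) (F : Type*) [Field F] (h2 : (2 : F) ≠ 0)
    (ρ : F) (hρ0 : ρ ≠ 0) (hρ : ∀ x : F, x * x ≠ ρ)
    (t : ℕ → Fˣ) (a b : F) (hab : a ^ 2 - b ^ 2 * ρ = 1)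
    (n : ℕ) (hn : n ≤ l - 1)
    (σ : Matrix (Fin n) (Fin n) F) (hσ : IsPermMat σ) :
    ((∃ (A : Matrix (Fin l) (Fin l) F)
        (n₁ n₂ : Matrix (Fin (2*l+1)) (Fin (2*l+1)) F),
        A.det ≠ 0 ∧ VlMem l n₁ ∧ VlMem l n₂ ∧
        jmap l ρ (torusMat l t a b ρ * wElt l n σ) = llMat l A * n₁ * wlMat F l * n₂) ↔
      (n = l - 1 ∧ a ≠ 1)) ∧
    (∀ (A : Matrix (Fin l) (Fin l) F)
        (n₁ n₂ : Matrix (Fin (2*l+1)) (Fin (2*l+1)) F),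
      n = l - 1 → a ≠ 1 → A.det ≠ 0 → VlMem l n₁ → VlMem l n₂ →
      jmap l ρ (torusMat l t a b ρ * wElt l n σ) = llMat l A * n₁ * wlMat F l * n₂ →
      astar A = Aspec l ρ a t σ) := by
  have hl1 : 1 ≤ l := by omega
  -- the entries of `A*` are those of the lower left block of `j(t·w)`
  have key : ∀ (A : Matrix (Fin l) (Fin l) F) (n₁ n₂ : Matrix (Fin (2*l+1)) (Fin (2*l+1)) F),
      VlMem l n₁ → VlMem l n₂ →
      jmap l ρ (torusMat l t a b ρ * wElt l n σ) = llMat l A * n₁ * wlMat F l * n₂ →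
      ∀ i j : Fin l, astar A i j =
        if (i : ℕ) = 0 then (if (j : ℕ) = l - 1 then (ρ / 2) * (1 - a) / 2 else 0)
        else if l - n ≤ (i : ℕ) ∧ (j : ℕ) < n then
          ((t (l - 1 - i))⁻¹ : F) * ent (astar σ) (i - (l - n)) j
        else 0 := by
    intro A n₁ n₂ h₁ h₂ h i j
    rw [← cell_lower_left A n₁ n₂ h₁ h₂ i j, ← h, jmap_lower_left hl1 hn h2 hρ0]
  refine ⟨⟨?_, ?_⟩, ?_⟩
  · rintro ⟨A, n₁, n₂, hA, h₁, h₂, h⟩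
    refine ⟨?_, ?_⟩
    · by_contra hn'
      -- for `n < l - 1` the second row of the block vanishes
      apply astar_row_ne_zero hA ⟨1, by omega⟩
      intro j
      rw [key A n₁ n₂ h₁ h₂ h, if_neg one_ne_zero, if_neg]
      rintro ⟨h3, -⟩
      simp only at h3
      omega
    · rintro rfl
      -- for `a = 1` the first row of the block vanishes
      apply astar_row_ne_zero hA ⟨0, by omega⟩
      intro j
      rw [key A n₁ n₂ h₁ h₂ h, if_pos rfl]
      simp
  · rintro ⟨hn', ha⟩
    have hc : ρ / 2 * (1 - a) / 2 ≠ 0 :=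
      div_ne_zero (mul_ne_zero (div_ne_zero hρ0 h2) (sub_ne_zero.2 ha.symm)) h2
    exact ⟨_, _, _, (astar_cellA hl1 hn' hc t hσ.mul_inv).1,
      rootElt_mem h2 _ _ _ (by simp only; omega) rfl (by simp only; omega) _,
      rootElt_mem h2 _ _ _ (by simp only; omega) rfl (by simp only; omega) _,
      (jmap_eq hl1 h2 hρ0 _ (tw_center hl1 hn σ t a b ρ)).trans
        (jExplicit_factor hl hn' h2 hρ0 hab ha t hσ.mul_inv)⟩
  · intro A n₁ n₂ hn' ha hA h₁ h₂ h
    ext i j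
    rw [key A n₁ n₂ h₁ h₂ h]
    simp only [Aspec, Matrix.of_apply]
    by_cases hi : (i : ℕ) = 0
    · rw [if_pos hi, if_pos hi]
    rw [if_neg hi, if_neg hi]
    by_cases hj : (j : ℕ) = l - 1
    · rw [if_pos hj, if_neg (by omega)]
    · have e1 : l - 1 - (i : ℕ) = l - 2 - (i - 1) := by omega
      have e2 : (i : ℕ) - (l - n) = i - 1 := by omega
      rw [if_neg hj, if_pos (by omega), e1, e2]
end
end

section
/- For every column vector x = (x_1,…,x_{l-1})ᵀ ∈ F^{l-1}, let W(x) be the (l−1)×(l−1) matrix with entries W(x)_{i,j} = (2/ρ)·x_i·x_{l-j}, and let g(x) ∈ GL_{2l}(F) be the block matrix, with block sizes (l−1, 1, 1, l−1), given by g(x) = [[I_{l-1}, 0, 2x, W(x)], [0, 1, 0, 0], [0, 0, 1, γ^{-1}·ᵀx·J_{l-1}], [0, 0, 0, I_{l-1}]]. Then g(x) ∈ SO_{2l}(J_{2l,ρ}), and there exists v ∈ V_l such that j(g(x)) = l_l(u(x))·v, where u(x) = [[I_{l-1}, x],[0,1]] ∈ GL_l(F). -/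
/-!
Every matrix involved is the identity plus a few rank-one terms `a bᵀ` (`vecMulVec a b`), where `a`
and `b` are built from standard basis vectors `e_k` (0-indexed), the padded vector `X` whose first
`l-1` coordinates are `x`, and its mirror image `X' = J X`. In these terms

* `g(x) = 1 + 2 X e_lᵀ + (2/ρ) (e_l + X) X'ᵀ`,
* `l_l(u(x)) = 1 + X e_{l-1}ᵀ - e_{l+1} X'ᵀ`,
* `v = 1 - (2/ρ) X e_{l+1}ᵀ + (2/ρ) e_{l-1} X'ᵀ`.

Since the supports of `X`, `X'` and the middle basis vectors are disjoint, nearly all dot products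
vanish, and products of such matrices collapse to short sums. The form `J_{2l,ρ}` sends `X` to `X'`
and `e_l` to `-ρ e_l`, so `ᵀg J g = J` reduces to a cancellation of scalars (`gX_form`), and
`v ∈ V_l` is checked in the same way (`vX_mem`). The determinants are `1` because both matrices are
unipotent upper triangular. As `M` is invertible (`Mmat_isUnit`), the factorization is equivalent to
`ĝ M = M (l_l(u(x)) v)` (`hatg_mul_Mmat`), which needs only the action of `M` on `X`, `X'`,
`e_{l-1}` and `e_{l+1}`.
-/

open Matrix BigOperators

noncomputable section

/-- Read a coordinate of `x ∈ F^{l-1}` with a natural-number index (`0` out of range). -/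
def xent {F : Type*} [Field F] {l : ℕ} (x : Fin (l-1) → F) (k : ℕ) : F :=
  if h : k < l - 1 then x ⟨k, h⟩ else 0

/-- The matrix `g(x) = [[I_{l-1}, 0, 2x, W(x)], [0,1,0,0], [0,0,1, γ⁻¹·ᵀx·J_{l-1}],
[0,0,0,I_{l-1}]]` with `W(x)_{i,j} = (2/ρ)·x_i·x_{l-j}` and `γ = ρ/2` (block sizes
`(l−1, 1, 1, l−1)`). -/
def gX {F : Type*} [Field F] (l : ℕ) (ρ : F) (x : Fin (l-1) → F) :
    Matrix (Fin (2*l)) (Fin (2*l)) F :=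
  Matrix.of fun i j =>
    if (i : ℕ) < l - 1 then
      (if i = j then 1
       else if (j : ℕ) = l then 2 * xent x (i : ℕ)
       else if l + 1 ≤ (j : ℕ) then (2/ρ) * xent x (i : ℕ) * xent x (2*l - 1 - (j : ℕ))
       else 0)
    else if (i : ℕ) = l then
      (if i = j then 1
       else if l + 1 ≤ (j : ℕ) then (ρ/2)⁻¹ * xent x (2*l - 1 - (j : ℕ))
       else 0)
    else (if i = j then 1 else 0)

/-- `u(x) = [[I_{l-1}, x],[0,1]] ∈ GL_l(F)`. -/
def uX {F : Type*} [Field F] (l : ℕ) (x : Fin (l-1) → F) : Matrix (Fin l) (Fin l) F :=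
  Matrix.of fun i j =>
    if i = j then 1
    else if (i : ℕ) < l - 1 ∧ (j : ℕ) = l - 1 then xent x (i : ℕ)
    else 0

/-! ### Basis vectors, padded vectors and their dot products -/

/-- The standard basis vector `e_k` of `F^n`, with `k` a 0-indexed natural number. -/
def basisVec (F : Type*) [Field F] (n k : ℕ) : Fin n → F := fun i => if (i : ℕ) = k then 1 else 0

/-- The vector of `F^n` whose first `l-1` coordinates are `x`, padded with zeros. -/
def padVec {F : Type*} [Field F] {l : ℕ} (n : ℕ) (x : Fin (l-1) → F) : Fin n → F :=
  fun i => xent x (i : ℕ)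

/-- The mirror image `J_n · padVec n x`: the last `l-1` coordinates are `x` in reverse order. -/
def mirVec {F : Type*} [Field F] {l : ℕ} (n : ℕ) (x : Fin (l-1) → F) : Fin n → F :=
  fun i => xent x (n - 1 - (i : ℕ))

section Vectors

variable {F : Type*} [Field F] {l n : ℕ}

lemma xent_of_le (x : Fin (l-1) → F) {k : ℕ} (h : l - 1 ≤ k) : xent x k = 0 := by
  simp [xent, Nat.not_lt.mpr h]

lemma basisVec_dot {k : ℕ} (hk : k < n) (w : Fin n → F) :
    basisVec F n k ⬝ᵥ w = w ⟨k, hk⟩ := by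
  rw [dotProduct, Finset.sum_eq_single (⟨k, hk⟩ : Fin n)]
  · simp [basisVec]
  · intro b _ hb
    have : (b : ℕ) ≠ k := fun h => hb (Fin.ext h)
    simp [basisVec, this]
  · simp

lemma basisVec_dot_self {k : ℕ} (hk : k < n) : basisVec F n k ⬝ᵥ basisVec F n k = 1 := by
  rw [basisVec_dot hk]; simp [basisVec]

lemma basisVec_dot_ne {j k : ℕ} (h : j ≠ k) : basisVec F n j ⬝ᵥ basisVec F n k = 0 := by
  refine Finset.sum_eq_zero fun i _ => ?_
  by_cases hi : (i : ℕ) = j <;> simp [basisVec, hi, h]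

lemma basisVec_dot_padVec (x : Fin (l-1) → F) {k : ℕ} (h : l - 1 ≤ k) :
    basisVec F n k ⬝ᵥ padVec n x = 0 := by
  refine Finset.sum_eq_zero fun i _ => ?_
  by_cases hi : (i : ℕ) = k <;> simp [basisVec, padVec, hi, xent_of_le x h]

lemma basisVec_dot_mirVec (x : Fin (l-1) → F) {k : ℕ} (h : l - 1 ≤ n - 1 - k) :
    basisVec F n k ⬝ᵥ mirVec n x = 0 := by
  refine Finset.sum_eq_zero fun i _ => ?_
  by_cases hi : (i : ℕ) = k <;> simp [basisVec, mirVec, hi, xent_of_le x h]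

lemma padVec_dot_mirVec (x : Fin (l-1) → F) (h : 2 * l ≤ n) :
    padVec n x ⬝ᵥ mirVec n x = 0 := by
  refine Finset.sum_eq_zero fun i _ => ?_
  by_cases hi : (i : ℕ) < l - 1
  · simp [mirVec, xent_of_le x (show l - 1 ≤ n - 1 - (i : ℕ) by omega)]
  · simp [padVec, xent_of_le x (Nat.not_lt.mp hi)]

lemma Jmat_mulVec_apply (w : Fin n → F) (i : Fin n) : (Jmat F n *ᵥ w) i = w i.rev := by
  rw [mulVec, dotProduct, Finset.sum_eq_single i.rev]
  · have : (i : ℕ) + (n - (i + 1)) + 1 = n := by omega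
    simp [Jmat, Fin.val_rev, this]
  · intro b _ hb
    have : ¬ (i : ℕ) + (b : ℕ) + 1 = n := fun h => hb (Fin.ext (by rw [Fin.val_rev]; omega))
    simp [Jmat, this]
  · simp

lemma Jmat_transpose : (Jmat F n)ᵀ = Jmat F n := by
  ext i j; simp [Jmat, add_comm (i : ℕ)]

lemma vecMul_Jmat (w : Fin n → F) : w ᵥ* Jmat F n = Jmat F n *ᵥ w := by
  rw [← mulVec_transpose, Jmat_transpose]

lemma Jmat_basisVec {j k : ℕ} (h : j + k + 1 = n) :
    Jmat F n *ᵥ basisVec F n j = basisVec F n k := by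
  ext i
  rw [Jmat_mulVec_apply]
  have : (n - ((i : ℕ) + 1) = j) ↔ (i : ℕ) = k := by omega
  simp [basisVec, Fin.val_rev, this]

lemma Jmat_padVec (x : Fin (l-1) → F) : Jmat F n *ᵥ padVec n x = mirVec n x := by
  ext i
  rw [Jmat_mulVec_apply]
  simp only [padVec, mirVec, Fin.val_rev]
  congr 1; omega

lemma Jmat_mirVec (x : Fin (l-1) → F) : Jmat F n *ᵥ mirVec n x = padVec n x := by
  ext i
  rw [Jmat_mulVec_apply]
  simp only [padVec, mirVec, Fin.val_rev]
  congr 1; omega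

end Vectors

/-! ### Rank-one expansions of the matrices -/

section Matrices

variable {F : Type*} [Field F] {l : ℕ}

lemma Jrho_eq (hl : 2 ≤ l) (ρ : F) :
    Jrho F l ρ = (1 + vecMulVec (basisVec F (2*l) (l-1))
        (basisVec F (2*l) l - basisVec F (2*l) (l-1))
      - vecMulVec (basisVec F (2*l) l)
        (ρ • basisVec F (2*l) (l-1) + basisVec F (2*l) l)) * Jmat F (2*l) := by
  rw [Jrho]
  congr 1
  ext i j
  simp only [Matrix.of_apply, Matrix.add_apply, Matrix.sub_apply, vecMulVec_apply, basisVec,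
    Pi.sub_apply, Pi.add_apply, Pi.smul_apply, Matrix.one_apply, Fin.ext_iff, smul_eq_mul]
  split_ifs <;> first | omega | simp

lemma gX_eq (hl : 2 ≤ l) (ρ : F) (x : Fin (l-1) → F) :
    gX l ρ x = 1 + (2 : F) • vecMulVec (padVec (2*l) x) (basisVec F (2*l) l)
      + (2 / ρ) • vecMulVec (basisVec F (2*l) l + padVec (2*l) x) (mirVec (2*l) x) := by
  ext i j
  have hi := i.2
  have hj := j.2
  have hX : ¬ (i : ℕ) < l - 1 → xent x (i : ℕ) = 0 := fun h => xent_of_le x (by omega)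
  have hR : ¬ l + 1 ≤ (j : ℕ) → xent x (2*l - 1 - (j : ℕ)) = 0 :=
    fun h => xent_of_le x (by omega)
  simp only [gX, Matrix.of_apply, Matrix.add_apply, Matrix.smul_apply, vecMulVec_apply, basisVec,
    padVec, mirVec, Pi.add_apply, Matrix.one_apply, Fin.ext_iff, smul_eq_mul]
  split_ifs <;> first
    | omega
    | (simp; done)
    | (simp [hX (by omega)]; done)
    | (simp [hR (by omega)]; done)
    | simp [hX (by omega), hR (by omega)]
    | simp [mul_assoc]

lemma ent_gX (hl : 2 ≤ l) (ρ : F) (x : Fin (l-1) → F) {a b : ℕ} (ha : a < 2*l) (hb : b < 2*l) :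
    ent (gX l ρ x) a b = (if a = b then 1 else 0) + 2 * (xent x a * if b = l then 1 else 0)
      + 2 / ρ * (((if a = l then 1 else 0) + xent x a) * xent x (2*l - 1 - b)) := by
  simp [ent, ha, hb, gX_eq hl, Matrix.one_apply, vecMulVec_apply, basisVec, padVec, mirVec]

lemma hatg_gX_eq (hl : 2 ≤ l) (ρ : F) (x : Fin (l-1) → F) :
    hatg l (gX l ρ x) = 1 + (2 : F) • vecMulVec (padVec (2*l+1) x) (basisVec F (2*l+1) (l+1))
      + (2 / ρ) • vecMulVec (basisVec F (2*l+1) (l+1) + padVec (2*l+1) x) (mirVec (2*l+1) x) := by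
  ext i j
  have hi := i.2
  have hj := j.2
  have hX : ¬ (i : ℕ) < l - 1 → xent x (i : ℕ) = 0 := fun h => xent_of_le x (by omega)
  have hR : ¬ l + 2 ≤ (j : ℕ) → xent x (2*l + 1 - 1 - (j : ℕ)) = 0 :=
    fun h => xent_of_le x (by omega)
  -- Skipping the inserted index `l` does not affect `X` (zero from `l-1` on), and shifts `X'` by
  -- one, matching the change of mirror centre from `2l` to `2l+1`.
  have hXi : xent x (if (i : ℕ) < l then (i : ℕ) else (i : ℕ) - 1) = xent x (i : ℕ) := by
    split_ifs
    · rfl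
    · rw [hX (by omega), xent_of_le x (by omega)]
  have hRj : (j : ℕ) ≠ l → xent x (2*l - 1 - if (j : ℕ) < l then (j : ℕ) else (j : ℕ) - 1)
      = xent x (2*l + 1 - 1 - (j : ℕ)) := by
    intro hjl
    split_ifs
    · rw [hR (by omega), xent_of_le x (by omega)]
    · congr 1; omega
  by_cases hjl : (j : ℕ) = l
  · simp [hatg, Matrix.one_apply, vecMulVec_apply, basisVec, mirVec, hjl,
      xent_of_le x (show l - 1 ≤ 2*l - l by omega)]
  by_cases hil : (i : ℕ) = l
  · simp [hatg, Matrix.one_apply, vecMulVec_apply, basisVec, padVec, hil,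
      xent_of_le x (show l - 1 ≤ l by omega)]
  have h1 : ((if (i : ℕ) < l then (i : ℕ) else (i : ℕ) - 1)
      = if (j : ℕ) < l then (j : ℕ) else (j : ℕ) - 1) ↔ i = j := by
    rw [Fin.ext_iff]; split_ifs <;> omega
  have h2 : (if (i : ℕ) < l then (i : ℕ) else (i : ℕ) - 1) = l ↔ (i : ℕ) = l + 1 := by
    split_ifs <;> omega
  have h3 : (if (j : ℕ) < l then (j : ℕ) else (j : ℕ) - 1) = l ↔ (j : ℕ) = l + 1 := by
    split_ifs <;> omega
  simp only [hatg, Matrix.of_apply, hil, hjl, or_self, if_false]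
  rw [ent_gX hl ρ x (by split_ifs <;> omega) (by split_ifs <;> omega), hXi, hRj hjl]
  simp only [h1, h2, h3, Matrix.add_apply, Matrix.smul_apply, Matrix.one_apply, vecMulVec_apply,
    basisVec, padVec, mirVec, Pi.add_apply, smul_eq_mul]

lemma Mmat_eq (hl : 2 ≤ l) (ρ : F) :
    Mmat F l ρ = 1
      + vecMulVec (basisVec F (2*l+1) (l-1)) (basisVec F (2*l+1) l - basisVec F (2*l+1) (l-1))
      + vecMulVec (basisVec F (2*l+1) l) ((1 / 2 : F) • basisVec F (2*l+1) (l-1)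
        + (1 / (2 * (ρ / 2))) • basisVec F (2*l+1) (l+1) - basisVec F (2*l+1) l)
      + vecMulVec (basisVec F (2*l+1) (l+1)) ((1 / 2 : F) • basisVec F (2*l+1) (l-1)
        - (1 / (2 * (ρ / 2))) • basisVec F (2*l+1) (l+1) - basisVec F (2*l+1) (l+1)) := by
  ext i j
  simp only [Mmat, Matrix.of_apply, Matrix.add_apply, vecMulVec_apply, basisVec,
    Pi.sub_apply, Pi.add_apply, Pi.smul_apply, Matrix.one_apply, Fin.ext_iff, smul_eq_mul]
  split_ifs <;> first | omega | simp

lemma uX_eq (hl : 2 ≤ l) (x : Fin (l-1) → F) :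
    uX l x = 1 + vecMulVec (padVec l x) (basisVec F l (l-1)) := by
  ext i j
  have hX : ¬ (i : ℕ) < l - 1 → xent x (i : ℕ) = 0 := fun h => xent_of_le x (by omega)
  simp only [uX, Matrix.of_apply, Matrix.add_apply, vecMulVec_apply, basisVec, padVec,
    Matrix.one_apply, Fin.ext_iff]
  split_ifs <;> first
    | omega
    | (simp; done)
    | simp [hX (by omega)]

lemma uX_inv (hl : 2 ≤ l) (x : Fin (l-1) → F) :
    (uX l x)⁻¹ = 1 - vecMulVec (padVec l x) (basisVec F l (l-1)) := by
  apply Matrix.inv_eq_right_inv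
  simp [uX_eq hl, add_mul, mul_sub, vecMulVec_mul_vecMulVec, basisVec_dot_padVec x le_rfl]

lemma Jmat_mul_self (n : ℕ) : Jmat F n * Jmat F n = 1 := by
  refine Matrix.toLin'.injective (LinearMap.ext fun w => funext fun i => ?_)
  simp [Jmat_mulVec_apply]

lemma astar_uX (hl : 2 ≤ l) (x : Fin (l-1) → F) :
    astar (uX l x) = 1 - vecMulVec (basisVec F l 0) (mirVec l x) := by
  rw [astar, uX_inv hl]
  simp [mul_sub, sub_mul, Jmat_mul_self, transpose_vecMulVec, mul_vecMulVec, vecMulVec_mul,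
    vecMul_Jmat, Jmat_padVec, Jmat_basisVec (F := F) (n := l) (j := l-1) (k := 0) (by omega)]

lemma llMat_uX_eq (hl : 2 ≤ l) (x : Fin (l-1) → F) :
    llMat l (uX l x) = 1 + vecMulVec (padVec (2*l+1) x) (basisVec F (2*l+1) (l-1))
      - vecMulVec (basisVec F (2*l+1) (l+1)) (mirVec (2*l+1) x) := by
  ext i j
  have hi := i.2
  have hj := j.2
  have hX : ¬ (i : ℕ) < l - 1 → xent x (i : ℕ) = 0 := fun h => xent_of_le x (by omega)
  have hR : ¬ l + 2 ≤ (j : ℕ) → xent x (2*l - (j : ℕ)) = 0 :=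
    fun h => xent_of_le x (by omega)
  rw [llMat, astar_uX hl, uX_eq hl]
  simp only [ent, Matrix.of_apply, Matrix.add_apply, Matrix.sub_apply, vecMulVec_apply, basisVec,
    padVec, mirVec, Matrix.one_apply, Fin.ext_iff, add_tsub_cancel_right]
  have hRj : l + 1 ≤ (j : ℕ) →
      xent x (l - 1 - ((j : ℕ) - (l + 1))) = xent x (2*l - (j : ℕ)) := by
    intro h; congr 1; omega
  split_ifs <;> first
    | omega
    | (simp; done)
    | (simp [hX (by omega)]; done)
    | (simp [hR (by omega)]; done)
    | (simp [hX (by omega), hR (by omega)]; done)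
    | simp [hRj (by omega)]

/-! ### `g(x)` lies in the even special orthogonal group -/

lemma gX_det (hl : 2 ≤ l) (ρ : F) (x : Fin (l-1) → F) : (gX l ρ x).det = 1 := by
  have hdiag : ∀ i, gX l ρ x i i = 1 := fun i => by simp [gX]
  rw [Matrix.det_of_isUpperTriangular]
  · simp [hdiag]
  · intro i j hij
    have hij : (j : ℕ) < (i : ℕ) := hij
    simp only [gX, Matrix.of_apply, Fin.ext_iff]
    split_ifs <;> first | omega | rfl

lemma gX_form (hl : 2 ≤ l) (ρ : F) (hρ0 : ρ ≠ 0) (x : Fin (l-1) → F) :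
    (gX l ρ x)ᵀ * Jrho F l ρ * gX l ρ x = Jrho F l ρ := by
  have d1 := basisVec_dot_padVec (n := 2*l) x (k := l) (by omega)
  have d2 := basisVec_dot_padVec (n := 2*l) x (k := l-1) (by omega)
  have d3 := basisVec_dot_mirVec (n := 2*l) x (k := l) (by omega)
  have d4 := basisVec_dot_mirVec (n := 2*l) x (k := l-1) (by omega)
  have d5 := padVec_dot_mirVec (n := 2*l) x le_rfl
  have d6 := basisVec_dot_self (F := F) (n := 2*l) (k := l) (by omega)
  have d7 := basisVec_dot_ne (F := F) (n := 2*l) (j := l) (k := l-1) (by omega)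
  have d1' := (dotProduct_comm _ _).trans d1
  have d2' := (dotProduct_comm _ _).trans d2
  have d3' := (dotProduct_comm _ _).trans d3
  have d5' := (dotProduct_comm _ _).trans d5
  have d7' := (dotProduct_comm _ _).trans d7
  have j1 := Jmat_basisVec (F := F) (n := 2*l) (j := l-1) (k := l) (by omega)
  have j2 := Jmat_basisVec (F := F) (n := 2*l) (j := l) (k := l-1) (by omega)
  have a1 : Jrho F l ρ *ᵥ padVec (2*l) x = mirVec (2*l) x := by
    simp [Jrho_eq hl, ← mulVec_mulVec, Jmat_padVec, add_mulVec, sub_mulVec, vecMulVec_mulVec,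
      sub_dotProduct, add_dotProduct, d3, d4]
  have a2 : padVec (2*l) x ᵥ* Jrho F l ρ = mirVec (2*l) x := by
    simp [Jrho_eq hl, ← vecMul_vecMul, vecMul_Jmat, vecMul_add, vecMul_sub, vecMul_vecMulVec,
      d1', d2', Jmat_padVec]
  have a3 : Jrho F l ρ *ᵥ basisVec F (2*l) l = (-ρ) • basisVec F (2*l) l := by
    have d8 := basisVec_dot_self (F := F) (n := 2*l) (k := l-1) (by omega)
    simp [Jrho_eq hl, ← mulVec_mulVec, j2, add_mulVec, sub_mulVec, vecMulVec_mulVec,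
      sub_dotProduct, add_dotProduct, d7, d8]
  have a4 : basisVec F (2*l) l ᵥ* Jrho F l ρ = (-ρ) • basisVec F (2*l) l := by
    simp [Jrho_eq hl, ← vecMul_vecMul, vecMul_Jmat, vecMul_add, vecMul_sub, vecMul_vecMulVec,
      d7, d6, mulVec_smul, mulVec_neg, j1]
  rw [gX_eq hl]
  simp only [transpose_add, transpose_smul, transpose_one, transpose_vecMulVec, add_mul, mul_add,
    one_mul, mul_one, smul_mul_assoc, mul_smul_comm, vecMulVec_mul, mul_vecMulVec,
    add_vecMul, mulVec_add, a1, a2, a3, a4, vecMulVec_mulVec, add_dotProduct, smul_dotProduct,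
    d1, d3', d5', d6]
  ext i j
  simp [vecMulVec_apply]
  field_simp
  ring

/-! ### The unipotent factor -/

/-- The unipotent factor `v` of `j(g(x)) = l_l(u(x)) · v`: it is `I` except that `e_{l+1}` goes
to `e_{l+1} - (2/ρ) x` and the last `l-1` basis vectors get a multiple of `e_{l-1}` added
(0-indexed basis). -/
def vX {F : Type*} [Field F] (l : ℕ) (ρ : F) (x : Fin (l-1) → F) :
    Matrix (Fin (2*l+1)) (Fin (2*l+1)) F :=
  1 - (2 / ρ) • vecMulVec (padVec (2*l+1) x) (basisVec F (2*l+1) (l+1))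
    + (2 / ρ) • vecMulVec (basisVec F (2*l+1) (l-1)) (mirVec (2*l+1) x)

/-- `v - 1` is strictly block upper triangular for the block sizes `(l, 1, l)`. -/
lemma vX_block (hl : 2 ≤ l) (ρ : F) (x : Fin (l-1) → F) (i j : Fin (2*l+1))
    (h : ¬ blockOf3 l (i : ℕ) < blockOf3 l (j : ℕ)) :
    vX l ρ x i j = if i = j then 1 else 0 := by
  have hj := j.2
  have hX : ¬ (i : ℕ) < l - 1 → xent x (i : ℕ) = 0 := fun h => xent_of_le x (by omega)
  have hR : ¬ l + 2 ≤ (j : ℕ) → xent x (2*l + 1 - 1 - (j : ℕ)) = 0 :=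
    fun h => xent_of_le x (by omega)
  have hij : l ≤ (i : ℕ) ∨ (j : ℕ) < l := by
    by_contra! hc
    apply h
    simp only [blockOf3]
    split_ifs <;> omega
  simp only [vX, Matrix.add_apply, Matrix.sub_apply, Matrix.smul_apply, vecMulVec_apply, basisVec,
    padVec, mirVec, Matrix.one_apply]
  rcases hij with hi | hi
  · simp [hX (by omega), show (i : ℕ) ≠ l - 1 by omega]
  · have := hR (by omega)
    rw [this]
    simp [show (j : ℕ) ≠ l + 1 by omega]

lemma vX_mem (hl : 2 ≤ l) (ρ : F) (x : Fin (l-1) → F) : VlMem l (vX l ρ x) := by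
  refine ⟨⟨?_, ?_⟩, vX_block hl ρ x⟩
  · rw [Matrix.det_of_isUpperTriangular]
    · exact Finset.prod_eq_one fun i _ => by rw [vX_block hl ρ x i i (lt_irrefl _), if_pos rfl]
    · intro i j hij
      have hij' : (j : ℕ) < (i : ℕ) := hij
      rw [vX_block hl ρ x i j, if_neg (Fin.ne_of_gt hij')]
      simp only [blockOf3]
      split_ifs <;> omega
  · have d1 := basisVec_dot_padVec (n := 2*l+1) x (k := l-1) (by omega)
    have d2 := basisVec_dot_padVec (n := 2*l+1) x (k := l+1) (by omega)
    have d3 := basisVec_dot_mirVec (n := 2*l+1) x (k := l-1) (by omega)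
    have d5 := padVec_dot_mirVec (n := 2*l+1) x (by omega)
    have d6 := basisVec_dot_ne (F := F) (n := 2*l+1) (j := l-1) (k := l+1) (by omega)
    have d3' := (dotProduct_comm _ _).trans d3
    have d5' := (dotProduct_comm _ _).trans d5
    have d6' := (dotProduct_comm _ _).trans d6
    have j1 := Jmat_basisVec (F := F) (n := 2*l+1) (j := l-1) (k := l+1) (by omega)
    simp only [vX, transpose_add, transpose_sub, transpose_smul, transpose_one,
      transpose_vecMulVec, add_mul, mul_add, sub_mul, mul_sub, one_mul, mul_one, smul_mul_assoc,
      mul_smul_comm, vecMulVec_mul, mul_vecMulVec, vecMul_Jmat, Jmat_padVec, j1,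
      vecMulVec_mulVec, d2, d3', d5', d6']
    ext i j
    simp [vecMulVec_apply]

/-! ### Conjugation by `M` -/

lemma Mmat_isUnit (hl : 2 ≤ l) (h2 : (2 : F) ≠ 0) (ρ : F) (hρ0 : ρ ≠ 0) :
    IsUnit (Mmat F l ρ).det := by
  have d1 := basisVec_dot_self (F := F) (n := 2*l+1) (k := l-1) (by omega)
  have d2 := basisVec_dot_self (F := F) (n := 2*l+1) (k := l) (by omega)
  have d3 := basisVec_dot_self (F := F) (n := 2*l+1) (k := l+1) (by omega)
  have d4 := basisVec_dot_ne (F := F) (n := 2*l+1) (j := l-1) (k := l) (by omega)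
  have d5 := basisVec_dot_ne (F := F) (n := 2*l+1) (j := l-1) (k := l+1) (by omega)
  have d6 := basisVec_dot_ne (F := F) (n := 2*l+1) (j := l) (k := l+1) (by omega)
  have d4' := (dotProduct_comm _ _).trans d4
  have d5' := (dotProduct_comm _ _).trans d5
  have d6' := (dotProduct_comm _ _).trans d6
  -- The inverse sends `e_{l-1} ↦ e_l`, `e_l ↦ e_{l-1} + γ e_{l+1}`, `e_{l+1} ↦ e_{l-1} - γ e_{l+1}`.
  refine Matrix.isUnit_det_of_right_inverse (B := 1
    + vecMulVec (basisVec F (2*l+1) (l-1))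
      (basisVec F (2*l+1) l + basisVec F (2*l+1) (l+1) - basisVec F (2*l+1) (l-1))
    + vecMulVec (basisVec F (2*l+1) l) (basisVec F (2*l+1) (l-1) - basisVec F (2*l+1) l)
    + vecMulVec (basisVec F (2*l+1) (l+1)) ((ρ / 2) • basisVec F (2*l+1) l
      - (ρ / 2) • basisVec F (2*l+1) (l+1) - basisVec F (2*l+1) (l+1))) ?_
  rw [Mmat_eq hl]
  simp only [add_mul, mul_add, one_mul, mul_one, vecMulVec_mul_vecMulVec, add_dotProduct,
    sub_dotProduct, smul_dotProduct, d1, d2, d3, d4, d5, d6, d4', d5', d6']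
  ext i j
  simp [vecMulVec_apply]
  field_simp
  ring

/-- The factorization `j(g(x)) = l_l(u(x)) · v`, with `M⁻¹` moved to the other side. -/
lemma hatg_mul_Mmat (hl : 2 ≤ l) (h2 : (2 : F) ≠ 0) (ρ : F) (hρ0 : ρ ≠ 0)
    (x : Fin (l-1) → F) :
    hatg l (gX l ρ x) * Mmat F l ρ = Mmat F l ρ * (llMat l (uX l x) * vX l ρ x) := by
  have d1 := basisVec_dot_self (F := F) (n := 2*l+1) (k := l-1) (by omega)
  have d3 := basisVec_dot_self (F := F) (n := 2*l+1) (k := l+1) (by omega)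
  have d4 := basisVec_dot_ne (F := F) (n := 2*l+1) (j := l-1) (k := l) (by omega)
  have d5 := basisVec_dot_ne (F := F) (n := 2*l+1) (j := l-1) (k := l+1) (by omega)
  have d6 := basisVec_dot_ne (F := F) (n := 2*l+1) (j := l) (k := l+1) (by omega)
  have d4' := (dotProduct_comm _ _).trans d4
  have d5' := (dotProduct_comm _ _).trans d5
  have d6' := (dotProduct_comm _ _).trans d6
  have p1 := basisVec_dot_padVec (n := 2*l+1) x (k := l-1) (by omega)
  have p2 := basisVec_dot_padVec (n := 2*l+1) x (k := l) (by omega)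
  have p3 := basisVec_dot_padVec (n := 2*l+1) x (k := l+1) (by omega)
  have m1 := (dotProduct_comm _ _).trans (basisVec_dot_mirVec (n := 2*l+1) x (k := l-1) (by omega))
  have m2 := (dotProduct_comm _ _).trans (basisVec_dot_mirVec (n := 2*l+1) x (k := l) (by omega))
  have m3 := (dotProduct_comm _ _).trans (basisVec_dot_mirVec (n := 2*l+1) x (k := l+1) (by omega))
  have mp := (dotProduct_comm _ _).trans (padVec_dot_mirVec (n := 2*l+1) x (by omega))
  have a1 : Mmat F l ρ *ᵥ padVec (2*l+1) x = padVec (2*l+1) x := by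
    simp [Mmat_eq hl, add_mulVec, vecMulVec_mulVec, sub_dotProduct, add_dotProduct, p1, p2, p3]
  have a2 : mirVec (2*l+1) x ᵥ* Mmat F l ρ = mirVec (2*l+1) x := by
    simp [Mmat_eq hl, vecMul_add, vecMul_vecMulVec, m1, m2, m3]
  have a3 : Mmat F l ρ *ᵥ basisVec F (2*l+1) (l-1)
      = (1 / 2 : F) • (basisVec F (2*l+1) l + basisVec F (2*l+1) (l+1)) := by
    simp [Mmat_eq hl, add_mulVec, vecMulVec_mulVec, sub_dotProduct, add_dotProduct,
      d1, d4', d5']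
    ext i
    simp
    ring
  have a4 : Mmat F l ρ *ᵥ basisVec F (2*l+1) (l+1)
      = (1 / (2 * (ρ / 2))) • (basisVec F (2*l+1) l - basisVec F (2*l+1) (l+1)) := by
    simp [Mmat_eq hl, add_mulVec, vecMulVec_mulVec, sub_dotProduct, add_dotProduct,
      d3, d5, d6]
    ext i
    simp
    ring
  have a5 : basisVec F (2*l+1) (l+1) ᵥ* Mmat F l ρ
      = (1 / 2 : F) • basisVec F (2*l+1) (l-1)
        - (1 / (2 * (ρ / 2))) • basisVec F (2*l+1) (l+1) := by
    simp [Mmat_eq hl, vecMul_add, vecMul_vecMulVec, d3, d5', d6']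
  -- `l_l(u(x)) · v` as a sum of rank-one terms
  have hprod : llMat l (uX l x) * vX l ρ x = 1
      + vecMulVec (padVec (2*l+1) x) (basisVec F (2*l+1) (l-1))
      - vecMulVec (basisVec F (2*l+1) (l+1)) (mirVec (2*l+1) x)
      - (2 / ρ) • vecMulVec (padVec (2*l+1) x) (basisVec F (2*l+1) (l+1))
      + (2 / ρ) • vecMulVec (basisVec F (2*l+1) (l-1) + padVec (2*l+1) x)
        (mirVec (2*l+1) x) := by
    rw [llMat_uX_eq hl, vX]
    simp only [add_mul, sub_mul, mul_add, mul_sub, one_mul, mul_one, mul_smul_comm,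
      vecMulVec_mul_vecMulVec, p1, d1, mp, m1]
    ext i j
    simp [vecMulVec_apply]
    ring
  rw [hprod, hatg_gX_eq hl]
  simp only [add_mul, mul_add, mul_sub, one_mul, mul_one, mul_smul_comm, smul_mul_assoc,
    vecMulVec_mul, mul_vecMulVec, mulVec_add, a1, a2, a3, a4, a5]
  ext i j
  simp [vecMulVec_apply]
  field_simp
  ring

end Matrices

/-- `g(x) ∈ SO_{2l}(J_{2l,ρ})` and `j(g(x)) = l_l(u(x))·v` for some
`v ∈ V_l`. -/
theorem statement19 (l : ℕ) (hl : 2 ≤ l) (F : Type*) [Field F] (h2 : (2 : F) ≠ 0)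
    (ρ : F) (hρ0 : ρ ≠ 0) (hρ : ∀ x : F, x * x ≠ ρ) :
    ∀ x : Fin (l-1) → F,
      SO2l l ρ (gX l ρ x) ∧
      ∃ v : Matrix (Fin (2*l+1)) (Fin (2*l+1)) F,
        VlMem l v ∧ jmap l ρ (gX l ρ x) = llMat l (uX l x) * v := by
  intro x
  refine ⟨⟨gX_det hl ρ x, gX_form hl ρ hρ0 x⟩, vX l ρ x, vX_mem hl ρ x, ?_⟩
  rw [jmap, Matrix.mul_assoc, hatg_mul_Mmat hl h2 ρ hρ0 x,
    Matrix.nonsing_inv_mul_cancel_left _ _ (Mmat_isUnit hl h2 ρ hρ0)]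
end
end
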